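/- arXiv:2310.12687 — 3 statements merged into one kernel-verified Lean document; each statement's English description precedes it below -/
import Mathlib

section
/- For every n ≥ 1, the number of Tamari interval-posets of size n equals 2·(4n+1)!/((n+1)!·(3n+2)!). Equivalently, if N(n) denotes the number of partial orders on {1,…,n} that are Tamari interval-posets, then (n+1)! · (3n+2)! · N(n) = 2 · (4n+1)!. -/
/-- A Tamari interval-poset of size `n`: a partial order `r` on `{1,…,n}`
(modeled on `Fin n`) such that for all `a < b < c`, `a ≺ c` implies `b ≺ c`,
and `c ≺ a` implies `b ≺ a`. -/
def IsTamariIntervalPoset (n : ℕ) (r : Fin n → Fin n → Prop) : Prop :=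
  IsPartialOrder (Fin n) r ∧
    (∀ a b c : Fin n, a < b → b < c → r a c → r b c) ∧
    (∀ a b c : Fin n, a < b → b < c → r c a → r b a)

/-!
Cut an interval-poset of size `n + 1` at the greatest `k` above its first element `0`. The elements
below `k` in the poset are then exactly `0, …, k + s` for some `s`. The parts to the left and to the
right of `k` are arbitrary interval-posets, and `s` can be any cut of the right part, that is, a
position such that the elements before it form a down-set. Counting cuts by a catalytic variable `x`
turns this into `(x - 1) (F(x) - x) = t x F(x) (F(x) - F(1))`.

This equation is solved by `F(x) = x c (Q - (Q - 1) c)`, where `Q = 1 + t Q⁴` is the generating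
function of quaternary trees and `c = 1 + x t Q² c²`. At `x = 1` both series agree, so
`F(1) = 2 Q² - Q³`, and the coefficients of the powers of `Q` are Raney numbers.
-/

open PowerSeries Finset
open scoped Polynomial

/-! ### Raney series -/

section Raney

theorem subst_injective_of_isUnit_coeff_one {R : Type*} [CommRing R] {g : R⟦X⟧}
    (hg₀ : constantCoeff g = 0) (hg₁ : IsUnit (coeff 1 g)) :
    Function.Injective (subst g : R⟦X⟧ → R⟦X⟧) := by
  refine Function.LeftInverse.injective (g := subst (g.substInvOfIsUnit hg₁)) fun f => ?_
  rw [subst_comp_subst_apply (.of_constantCoeff_zero' hg₀) (.substInvOfIsUnit g hg₁),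
    subst_substInvOfIsUnit_right g hg₀, X_subst]

theorem coeff_subst_mul_of_X_dvd {R : Type*} [CommRing R] (f q : R⟦X⟧) {g : R⟦X⟧}
    (hg : PowerSeries.X ∣ g) (m : ℕ) :
    coeff m (f.subst g * q) = ∑ n ∈ range (m + 1), coeff n f * coeff m (g ^ n * q) := by
  have hsubst : HasSubst g := .of_constantCoeff_zero' (X_dvd_iff.1 hg)
  have htail (h : R⟦X⟧) : coeff m (g ^ (m + 1) * h) = 0 :=
    X_pow_dvd_iff.1 ((pow_dvd_pow_of_dvd hg _).mul_right h) m m.lt_succ_self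
  conv_lhs => rw [eq_X_pow_mul_shift_add_trunc (m + 1) f]
  rw [subst_add hsubst, subst_mul hsubst, subst_pow hsubst, subst_X hsubst, subst_coe hsubst,
    add_mul, map_add, mul_assoc, htail, zero_add,
    Polynomial.aeval_eq_sum_range' (natDegree_trunc_lt f m), sum_mul, map_sum]
  refine sum_congr rfl fun n hn => ?_
  rw [coeff_trunc, if_pos (mem_range.1 hn), smul_mul_assoc, PowerSeries.coeff_smul, smul_eq_mul]

theorem coeff_one_sub_X_pow {R : Type*} [CommRing R] (k n : ℕ) :
    coeff n ((1 - X) ^ k : R⟦X⟧) = (-1) ^ n * (k.choose n : R) := by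
  have h : ((1 - X) ^ k : R⟦X⟧) = evalNegHom (((1 + Polynomial.X) ^ k : R[X]) : R⟦X⟧) := by
    simp [sub_eq_add_neg]
  rw [h, evalNegHom, coeff_rescale, Polynomial.coeff_coe, Polynomial.coeff_one_add_X_pow]

theorem sum_neg_one_pow_mul_choose_mul_eval_eq_zero {R : Type*} [CommRing R] {P : R[X]} {m : ℕ}
    (hP : P.natDegree < m) :
    ∑ n ∈ range (m + 1), (-1) ^ (m - n) * (m.choose n : R) * P.eval (n : R) = 0 := by
  have h := congrFun (Polynomial.fwdDiff_iter_eq_zero_of_degree_lt hP) 0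
  rw [fwdDiff_iter_eq_sum_shift] at h
  simpa using h

theorem sum_neg_one_pow_mul_choose_mul_descFactorial (R : Type*) [CommRing R] [IsDomain R]
    (a b l : ℕ) : ∑ n ∈ range (l + 2),
      (-1) ^ (l + 1 - n) * ((l + 1).choose n : R) * ((a * n + b).descFactorial l : R) = 0 := by
  let L : R[X] := Polynomial.C (a : R) * Polynomial.X + Polynomial.C (b : R)
  have hdeg : ((descPochhammer R l).comp L).natDegree < l + 1 := by
    have hL : L.natDegree ≤ 1 := Polynomial.natDegree_linear_le
    have hcomp := Polynomial.natDegree_comp_le (p := descPochhammer R l) (q := L)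
    rw [descPochhammer_natDegree] at hcomp
    have := Nat.mul_le_mul_left l hL
    omega
  have heval (n : ℕ) :
      ((descPochhammer R l).comp L).eval (n : R) = (a * n + b).descFactorial l := by
    rw [← descPochhammer_eval_eq_descFactorial]
    simp [L]
  simpa only [heval] using sum_neg_one_pow_mul_choose_mul_eval_eq_zero hdeg

theorem coeff_X_mul_one_sub_X_pow_pow_mul {R : Type*} [CommRing R] (k r : ℕ) {n m : ℕ}
    (hnm : n ≤ m) : coeff m ((X * (1 - X) ^ k : R⟦X⟧) ^ n * (1 - X) ^ r) =
      (-1) ^ (m - n) * ((k * n + r).choose (m - n) : R) := by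
  obtain ⟨j, rfl⟩ := Nat.exists_eq_add_of_le' hnm
  rw [mul_pow, ← pow_mul, mul_assoc, ← pow_add, coeff_X_pow_mul, coeff_one_sub_X_pow,
    Nat.add_sub_cancel]

/-- The Raney (two-parameter Fuss–Catalan) number `r / (p n + r) * (p n + r).choose n`, counting
ordered forests of `r` plane `p`-ary trees with `n` inner nodes in total. At `p n + r = 0` division
by zero makes it `0` instead of the customary `1`. -/
def raneyNumber (p r n : ℕ) : ℚ :=
  r / (p * n + r) * (p * n + r).choose n

/-- The generating function of the Raney numbers; for `r = 1` it is that of `p`-ary trees. -/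
noncomputable def raneySeries (p r : ℕ) : ℚ⟦X⟧ :=
  PowerSeries.mk (raneyNumber p r)

theorem raneyNumber_mul_choose (k r : ℕ) {l n : ℕ} (hn : n ≤ l + 1) :
    raneyNumber (k + 1) (r + 1) n * (k * n + (r + 1)).choose (l + 1 - n) =
      (r + 1) / (l + 1).factorial *
        ((l + 1).choose n * ((k + 1) * n + r).descFactorial l) := by
  have hcomm : (((k + 1) * n + r + 1).choose n * (k * n + (r + 1)).choose (l + 1 - n) : ℚ) =
      ((k + 1) * n + r + 1).choose (l + 1) * (l + 1).choose n := by
    have h := Nat.choose_mul (n := (k + 1) * n + r + 1) hn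
    rw [show (k + 1) * n + r + 1 - n = k * n + (r + 1) by rw [add_one_mul]; omega] at h
    exact_mod_cast h.symm
  have habsorb : ((k + 1) * n + r + 1 : ℚ) * ((k + 1) * n + r).choose l =
      ((k + 1) * n + r + 1).choose (l + 1) * (l + 1) := by
    exact_mod_cast Nat.add_one_mul_choose_eq ((k + 1) * n + r) l
  rw [raneyNumber, mul_assoc, ← Nat.add_assoc ((k + 1) * n), hcomm,
    Nat.descFactorial_eq_factorial_mul_choose]
  push_cast [Nat.factorial_succ]
  field_simp
  linear_combination -(l + 1).choose n * habsorb

theorem raneySeries_subst_mul_one_sub_X_pow (k r : ℕ) :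
    (raneySeries (k + 1) (r + 1)).subst (X * (1 - X) ^ k : ℚ⟦X⟧) * (1 - X) ^ (r + 1) = 1 := by
  ext m
  rw [coeff_subst_mul_of_X_dvd _ _ (dvd_mul_right _ _), sum_congr rfl fun n hn => congrArg (_ * ·)
    (coeff_X_mul_one_sub_X_pow_pow_mul k (r + 1) (mem_range_succ_iff.1 hn))]
  cases m with
  | zero => simpa [raneySeries, raneyNumber] using div_self (Nat.cast_add_one_ne_zero r)
  | succ l =>
    rw [PowerSeries.coeff_one, if_neg l.succ_ne_zero,
      ← mul_zero ((r + 1) / (l + 1).factorial : ℚ),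
      ← sum_neg_one_pow_mul_choose_mul_descFactorial ℚ (k + 1) r l, mul_sum]
    refine sum_congr rfl fun n hn => ?_
    rw [raneySeries, coeff_mk]
    linear_combination
      (-1) ^ (l + 1 - n) * raneyNumber_mul_choose k r (mem_range_succ_iff.1 hn)

theorem raneySeries_one_pow (k r : ℕ) :
    raneySeries (k + 1) 1 ^ (r + 1) = raneySeries (k + 1) (r + 1) := by
  have hsubst : HasSubst (X * (1 - X) ^ k : ℚ⟦X⟧) := .of_constantCoeff_zero' (by simp)
  have hone := raneySeries_subst_mul_one_sub_X_pow k 0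
  have hne : ((1 - X) ^ (r + 1) : ℚ⟦X⟧) ≠ 0 :=
    right_ne_zero_of_mul_eq_one (raneySeries_subst_mul_one_sub_X_pow k r)
  refine subst_injective_of_isUnit_coeff_one (g := X * (1 - X) ^ k) (by simp) (by simp)
    (mul_right_cancel₀ hne ?_)
  simp only [zero_add, pow_one] at hone
  rw [subst_pow hsubst, ← mul_pow, hone, one_pow, raneySeries_subst_mul_one_sub_X_pow]

theorem raneySeries_one_eq_one_add (k : ℕ) :
    raneySeries (k + 1) 1 = 1 + X * raneySeries (k + 1) 1 ^ (k + 1) := by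
  have hsubst : HasSubst (X * (1 - X) ^ k : ℚ⟦X⟧) := .of_constantCoeff_zero' (by simp)
  have hone := raneySeries_subst_mul_one_sub_X_pow k 0
  refine subst_injective_of_isUnit_coeff_one (g := X * (1 - X) ^ k) (by simp) (by simp) ?_
  rw [zero_add, pow_one] at hone
  rw [subst_add hsubst, subst_mul hsubst, subst_pow hsubst, subst_X hsubst,
    ← coe_substAlgHom hsubst, map_one, coe_substAlgHom]
  set c := (raneySeries (k + 1) 1).subst (X * (1 - X) ^ k : ℚ⟦X⟧)
  calc
    c = c * (1 - X) + X * c * 1 ^ k := by ring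
    _ = 1 + X * c * (c * (1 - X)) ^ k := by rw [hone]
    _ = 1 + X * (1 - X) ^ k * c ^ (k + 1) := by rw [mul_pow]; ring

theorem two_mul_raneyNumber_sub_raneyNumber (n : ℕ) :
    2 * raneyNumber 4 2 n - raneyNumber 4 3 n =
      2 * (4 * n + 1).factorial / ((n + 1).factorial * (3 * n + 2).factorial) := by
  have hchoose₂ := Nat.cast_add_choose ℚ (a := n) (b := 3 * n + 2)
  have hchoose₃ := Nat.cast_add_choose ℚ (a := n) (b := 3 * n + 3)
  rw [show n + (3 * n + 2) = 4 * n + 2 by ring, Nat.factorial_succ (4 * n + 1)] at hchoose₂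
  rw [show n + (3 * n + 3) = 4 * n + 3 by ring, Nat.factorial_succ (4 * n + 2),
    Nat.factorial_succ (4 * n + 1), Nat.factorial_succ (3 * n + 2)] at hchoose₃
  rw [raneyNumber, raneyNumber, hchoose₂, hchoose₃, Nat.factorial_succ n]
  push_cast
  field_simp
  ring

end Raney

/-! ### The catalytic equation -/

section Catalytic

variable {R : Type*} [CommRing R]

theorem exists_eq_one_add_mul_sq {s : R⟦X⟧} (hs : constantCoeff s = 0) :
    ∃ c : R⟦X⟧, c = 1 + s * c ^ 2 := by
  have hsubst : HasSubst s := .of_constantCoeff_zero' hs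
  refine ⟨(catalanSeries.map (Nat.castRingHom R)).subst s, ?_⟩
  have h := congrArg (fun f => substAlgHom hsubst (PowerSeries.map (Nat.castRingHom R) f))
    catalanSeries_sq_mul_X_add_one
  simp only [map_add, map_mul, map_pow, map_one, map_X, substAlgHom_X] at h
  rw [← coe_substAlgHom hsubst]
  linear_combination -h

theorem eq_of_eq_one_add_mul_sq {s c d : R⟦X⟧} (hs : constantCoeff s = 0)
    (hc : c = 1 + s * c ^ 2) (hd : d = 1 + s * d ^ 2) : c = d := by
  have hunit : IsUnit (1 - s * (c + d)) := by
    simp [PowerSeries.isUnit_iff_constantCoeff, hs]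
  refine sub_eq_zero.1 (hunit.mul_left_eq_zero.1 ?_)
  linear_combination hc - hd

/-- The functional equation `(x - 1) (F(x) - x) = t x F(x) (F(x) - F(1))` of the generating
function of interval-posets. The catalytic variable `x` is the `X` of the coefficient ring `R[X]`,
so that it can be specialized to `1` coefficientwise; the size variable `t` is the `X` of
power series. -/
def IsTamariCatalytic (F : R[X]⟦X⟧) : Prop :=
  (C Polynomial.X - 1) * (F - C Polynomial.X) =
    X * (C Polynomial.X * F * (F - map Polynomial.C (map (Polynomial.evalRingHom 1) F)))

theorem isLeftRegular_X_sub_one : IsLeftRegular (Polynomial.X - 1 : R[X]) :=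
  (Polynomial.monic_X_sub_C 1).isRegular.left

theorem isTamariCatalytic_iff {F : R[X]⟦X⟧} :
    IsTamariCatalytic F ↔ coeff 0 F = Polynomial.X ∧ ∀ n, (Polynomial.X - 1) * coeff (n + 1) F =
      ∑ p ∈ antidiagonal n, Polynomial.X * coeff p.1 F *
        (coeff p.2 F - Polynomial.C ((coeff p.2 F).eval 1)) := by
  have hzero : (Polynomial.X - 1) * (coeff 0 F - Polynomial.X) = 0 ↔ coeff 0 F = Polynomial.X := by
    rw [isLeftRegular_X_sub_one.mul_left_eq_zero_iff, sub_eq_zero]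
  rw [IsTamariCatalytic, ← map_one C, ← map_sub, PowerSeries.ext_iff, ← Nat.and_forall_add_one,
    ← hzero]
  simp only [mul_assoc, PowerSeries.coeff_C_mul, PowerSeries.coeff_succ_X_mul]
  simp [PowerSeries.coeff_C, PowerSeries.coeff_mul, mul_sum]

theorem IsTamariCatalytic.eq {F G : R[X]⟦X⟧} (hF : IsTamariCatalytic F)
    (hG : IsTamariCatalytic G) : F = G := by
  rw [isTamariCatalytic_iff] at hF hG
  ext1 n
  induction n using Nat.strong_induction_on with | _ n ih
  cases n with
  | zero => rw [hF.1, hG.1]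
  | succ n =>
    refine isLeftRegular_X_sub_one
      ((hF.2 n).trans (.trans (sum_congr rfl fun p hp => ?_) (hG.2 n).symm))
    have hp := HasAntidiagonal.mem_antidiagonal.1 hp
    rw [ih p.1 (by omega), ih p.2 (by omega)]

theorem sub_one_mul_sub_one_eq_of_eq_one_add {A : Type*} [CommRing A] {t x Q c f : A}
    (hQ : Q = 1 + t * Q ^ 4) (hc : c = 1 + x * t * Q ^ 2 * c ^ 2)
    (hf : f = c * (Q - (Q - 1) * c)) :
    (x - 1) * (f - 1) = t * x * f * (x * f - (2 * Q ^ 2 - Q ^ 3)) := by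
  -- The equation for `c` makes `x f` affine in `c`.
  have hxf : x * f = Q * (x * c - Q * c + Q) := by
    linear_combination x * hf - x * c ^ 2 * hQ + Q ^ 2 * hc
  linear_combination (1 - t * (x * f + Q * (x * c - Q * c + Q) - (2 * Q ^ 2 - Q ^ 3))) * hxf - hf +
    (x - 2 * Q) * hc + (c ^ 2 + (x - Q) * c + Q - 1) * hQ

theorem exists_isTamariCatalytic {Q : R⟦X⟧} (hQ : Q = 1 + X * Q ^ 4) :
    ∃ F : R[X]⟦X⟧, IsTamariCatalytic F ∧
      map (Polynomial.evalRingHom 1) F = 2 * Q ^ 2 - Q ^ 3 := by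
  let Q' : R[X]⟦X⟧ := map Polynomial.C Q
  obtain ⟨c, hc⟩ : ∃ c : R[X]⟦X⟧, c = 1 + C Polynomial.X * X * Q' ^ 2 * c ^ 2 :=
    exists_eq_one_add_mul_sq (by simp)
  have hQ' : Q' = 1 + X * Q' ^ 4 := by simpa [Q'] using congrArg (PowerSeries.map Polynomial.C) hQ
  have hevalQ : map (Polynomial.evalRingHom 1) Q' = Q := by
    ext n
    simp [Q']
  have hevalc : map (Polynomial.evalRingHom 1) c = Q := by
    refine eq_of_eq_one_add_mul_sq (s := X * Q ^ 2) (by simp) ?_ (by linear_combination hQ)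
    simpa [hevalQ] using congrArg (PowerSeries.map (Polynomial.evalRingHom 1)) hc
  have heval : map (Polynomial.evalRingHom 1) (C Polynomial.X * (c * (Q' - (Q' - 1) * c))) =
      2 * Q ^ 2 - Q ^ 3 := by
    simp only [map_mul, map_sub, map_one, hevalc, hevalQ, PowerSeries.map_C,
      Polynomial.coe_evalRingHom, Polynomial.eval_X]
    ring
  refine ⟨_, ?_, heval⟩
  have h := sub_one_mul_sub_one_eq_of_eq_one_add hQ' hc rfl
  rw [IsTamariCatalytic, heval]
  simp only [map_sub, map_mul, map_pow, map_ofNat]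
  linear_combination C Polynomial.X * h

theorem IsTamariCatalytic.map_eval_one {F : R[X]⟦X⟧} (hF : IsTamariCatalytic F) {Q : R⟦X⟧}
    (hQ : Q = 1 + X * Q ^ 4) : map (Polynomial.evalRingHom 1) F = 2 * Q ^ 2 - Q ^ 3 := by
  obtain ⟨G, hG, heval⟩ := exists_isTamariCatalytic hQ
  rw [hF.eq hG, heval]

end Catalytic

/-! ### Interval-posets -/

section IntervalPosets

theorem sum_card_filter_le {α M : Type*} [LinearOrder α] [AddCommMonoid M] (f : ℕ → M)
    (V : Finset α) : ∑ s ∈ V, f #{v ∈ V | s ≤ v} = ∑ i ∈ range #V, f (i + 1) := by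
  induction V using induction_on_min with
  | empty => simp
  | insert a V ha ih =>
    have haV : a ∉ V := fun h => (ha a h).false
    have hmin : #{v ∈ insert a V | a ≤ v} = #V + 1 := by
      rw [filter_true_of_mem (by simpa using fun v hv => (ha v hv).le),
        card_insert_of_notMem haV]
    rw [sum_insert haV, card_insert_of_notMem haV, sum_range_succ, add_comm, hmin, ← ih]
    congr 1
    refine sum_congr rfl fun s hs => ?_
    rw [filter_insert, if_neg (ha s hs).not_ge]

/-- Tamari interval-posets of size `n`, encoded as relations on `ℕ` supported on
`{0, …, n - 1}`, so that cutting and gluing need no casts between the types `Fin n`. -/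
structure IsIntervalPosetOn (n : ℕ) (r : ℕ → ℕ → Prop) : Prop where
  lt_and_lt : ∀ ⦃i j⦄, r i j → i < n ∧ j < n
  refl : ∀ ⦃i⦄, i < n → r i i
  antisymm : ∀ ⦃i j⦄, r i j → r j i → i = j
  trans : ∀ ⦃i j k⦄, r i j → r j k → r i k
  incr : ∀ ⦃a b c⦄, a < b → b < c → r a c → r b c
  decr : ∀ ⦃a b c⦄, a < b → b < c → r c a → r b a

/-- Extension of relations on `Fin n` by `False` identifies the two encodings of
interval-posets. -/
def intervalPosetEquiv (n : ℕ) :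
    {r : Fin n → Fin n → Prop // IsTamariIntervalPoset n r} ≃
      {r : ℕ → ℕ → Prop // IsIntervalPosetOn n r} where
  toFun r := ⟨fun i j => ∃ (hi : i < n) (hj : j < n), r.1 ⟨i, hi⟩ ⟨j, hj⟩, by
    obtain ⟨r, hr, hincr, hdecr⟩ := r
    exact {
      lt_and_lt := fun i j ⟨hi, hj, _⟩ => ⟨hi, hj⟩
      refl := fun i hi => ⟨hi, hi, hr.refl _⟩
      antisymm := fun i j ⟨_, _, h⟩ ⟨_, _, h'⟩ => congrArg Fin.val (hr.antisymm _ _ h h')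
      trans := fun i j k ⟨hi, _, h⟩ ⟨_, hk, h'⟩ => ⟨hi, hk, hr.trans _ _ _ h h'⟩
      incr := fun a b c hab hbc ⟨_, hc, h⟩ => ⟨hbc.trans hc, hc, hincr _ ⟨b, _⟩ _ hab hbc h⟩
      decr := fun a b c hab hbc ⟨hc, ha, h⟩ =>
        ⟨hbc.trans hc, ha, hdecr _ ⟨b, _⟩ _ hab hbc h⟩ }⟩
  invFun r := ⟨fun i j => r.1 i j,
    { refl := fun i => r.2.refl i.2
      trans := fun _ _ _ h h' => r.2.trans h h'
      antisymm := fun _ _ h h' => Fin.ext (r.2.antisymm h h') },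
    fun _ _ _ hab hbc h => r.2.incr hab hbc h,
    fun _ _ _ hab hbc h => r.2.decr hab hbc h⟩
  left_inv r := by
    ext i j
    simp
  right_inv r := by
    ext i j
    simp only [exists_prop]
    exact ⟨fun h => h.2.2, fun h => ⟨(r.2.lt_and_lt h).1, (r.2.lt_and_lt h).2, h⟩⟩

theorem finite_setOf_isIntervalPosetOn (n : ℕ) : {r | IsIntervalPosetOn n r}.Finite :=
  Finite.of_equiv _ (intervalPosetEquiv n)

/-- The finset of interval-posets of size `n`, in the encoding `IsIntervalPosetOn`. -/
noncomputable def intervalPosets (n : ℕ) : Finset (ℕ → ℕ → Prop) :=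
  (finite_setOf_isIntervalPosetOn n).toFinset

variable {n k m s d : ℕ} {r r₁ r₂ : ℕ → ℕ → Prop}

theorem mem_intervalPosets : r ∈ intervalPosets n ↔ IsIntervalPosetOn n r := by
  simp [intervalPosets]

theorem card_intervalPosets (n : ℕ) : #(intervalPosets n) =
    Nat.card {r : Fin n → Fin n → Prop // IsTamariIntervalPoset n r} := by
  rw [Nat.card_congr (intervalPosetEquiv n)]
  exact (Nat.card_eq_card_finite_toFinset (finite_setOf_isIntervalPosetOn n)).symm

theorem intervalPosets_zero : intervalPosets 0 = {fun _ _ => False} := by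
  ext r
  rw [mem_intervalPosets, mem_singleton]
  constructor
  · intro h
    ext i j
    exact iff_of_false (fun hij => Nat.not_lt_zero i (h.lt_and_lt hij).1) id
  · rintro rfl
    constructor <;> simp

/-- A cut of `r`: a position `s` such that `{0, …, s - 1}` is a down-set. -/
def IsCut (r : ℕ → ℕ → Prop) (s : ℕ) : Prop :=
  ∀ ⦃i j⦄, r i j → j < s → i < s

open Classical in
/-- The cuts of an interval-poset of size `n`; both `0` and `n` are among them. -/
noncomputable def cuts (n : ℕ) (r : ℕ → ℕ → Prop) : Finset ℕ :=
  {s ∈ range (n + 1) | IsCut r s}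

theorem mem_cuts : s ∈ cuts n r ↔ s ≤ n ∧ IsCut r s := by
  simp [cuts]

/-- The relation induced by `r` on `{0, …, k - 1}`. -/
def initialPart (k : ℕ) (r : ℕ → ℕ → Prop) (i j : ℕ) : Prop :=
  i < k ∧ j < k ∧ r i j

/-- The relation induced by `r` on `{d, d + 1, …}`, relabelled to start at `0`. -/
def finalPart (d : ℕ) (r : ℕ → ℕ → Prop) (i j : ℕ) : Prop :=
  r (i + d) (j + d)

/-- The relation obtained by writing `r₁` (of size `k`), a new element `k`, and `r₂` one after the
other, the new element lying above `r₁` and above the first `s` elements of `r₂`. -/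
def glue (k s : ℕ) (r₁ r₂ : ℕ → ℕ → Prop) (i j : ℕ) : Prop :=
  r₁ i j ∨ (j = k ∧ i ≤ k + s) ∨ (k < i ∧ k < j ∧ r₂ (i - (k + 1)) (j - (k + 1)))

theorem isIntervalPosetOn_initialPart (hr : IsIntervalPosetOn n r) (hk : k ≤ n) :
    IsIntervalPosetOn k (initialPart k r) where
  lt_and_lt _ _ h := ⟨h.1, h.2.1⟩
  refl _ hi := ⟨hi, hi, hr.refl (hi.trans_le hk)⟩
  antisymm _ _ h h' := hr.antisymm h.2.2 h'.2.2
  trans _ _ _ h h' := ⟨h.1, h'.2.1, hr.trans h.2.2 h'.2.2⟩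
  incr _ _ _ hab hbc h := ⟨hbc.trans h.2.1, h.2.1, hr.incr hab hbc h.2.2⟩
  decr _ _ _ hab hbc h := ⟨hbc.trans h.1, h.2.1, hr.decr hab hbc h.2.2⟩

theorem isIntervalPosetOn_finalPart (hr : IsIntervalPosetOn (m + d) r) :
    IsIntervalPosetOn m (finalPart d r) where
  lt_and_lt _ _ h := by simpa using hr.lt_and_lt h
  refl _ hi := hr.refl (Nat.add_lt_add_right hi d)
  antisymm _ _ h h' := Nat.add_right_cancel (hr.antisymm h h')
  trans _ _ _ h h' := hr.trans h h'
  incr _ _ _ hab hbc h := hr.incr (Nat.add_lt_add_right hab d) (Nat.add_lt_add_right hbc d) h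
  decr _ _ _ hab hbc h := hr.decr (Nat.add_lt_add_right hab d) (Nat.add_lt_add_right hbc d) h

theorem isIntervalPosetOn_glue (h₁ : IsIntervalPosetOn k r₁) (h₂ : IsIntervalPosetOn m r₂)
    (hs : s ∈ cuts m r₂) : IsIntervalPosetOn (k + m + 1) (glue k s r₁ r₂) := by
  obtain ⟨hsm, hcut⟩ := mem_cuts.1 hs
  have hdown {i j : ℕ} (hj : k < j) (hjs : j ≤ k + s) (hij : r₂ (i - (k + 1)) (j - (k + 1))) :
      i ≤ k + s := by
    have := hcut hij
    omega
  obtain ⟨hlt₁, hrefl₁, hantisymm₁, htrans₁, hincr₁, hdecr₁⟩ := h₁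
  obtain ⟨hlt₂, hrefl₂, hantisymm₂, htrans₂, hincr₂, hdecr₂⟩ := h₂
  constructor <;> grind [glue]

theorem initialPart_glue (h₁ : IsIntervalPosetOn k r₁) :
    initialPart k (glue k s r₁ r₂) = r₁ := by
  ext i j
  have := @h₁.lt_and_lt i j
  grind [initialPart, glue]

theorem finalPart_glue (h₁ : IsIntervalPosetOn k r₁) :
    finalPart (k + 1) (glue k s r₁ r₂) = r₂ := by
  ext i j
  have := @h₁.lt_and_lt (i + (k + 1)) (j + (k + 1))
  grind [finalPart, glue]

theorem isGreatest_glue_zero (h₁ : IsIntervalPosetOn k r₁) :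
    IsGreatest {j | glue k s r₁ r₂ 0 j} k := by
  refine ⟨.inr (.inl ⟨rfl, Nat.zero_le _⟩), ?_⟩
  rintro j (h | h | h)
  · exact (h₁.lt_and_lt h).2.le
  · exact h.1.le
  · exact absurd h.1 (Nat.not_lt_zero k)

theorem isGreatest_glue_right (h₁ : IsIntervalPosetOn k r₁) :
    IsGreatest {i | glue k s r₁ r₂ i k} (k + s) := by
  refine ⟨.inr (.inl ⟨rfl, le_rfl⟩), ?_⟩
  rintro i (h | h | h)
  · exact absurd (h₁.lt_and_lt h).2 (lt_irrefl k)
  · exact h.2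
  · exact absurd h.2.1 (lt_irrefl k)

theorem glue_injective {k' s' : ℕ} {r₁' r₂' : ℕ → ℕ → Prop}
    (h₁ : IsIntervalPosetOn k r₁) (h₁' : IsIntervalPosetOn k' r₁')
    (h : glue k s r₁ r₂ = glue k' s' r₁' r₂') : k = k' ∧ s = s' ∧ r₁ = r₁' ∧ r₂ = r₂' := by
  obtain rfl : k = k' := (isGreatest_glue_zero h₁).unique (h ▸ isGreatest_glue_zero h₁')
  have hs : k + s = k + s' := (isGreatest_glue_right h₁).unique (h ▸ isGreatest_glue_right h₁')
  refine ⟨rfl, Nat.add_left_cancel hs, ?_, ?_⟩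
  · rw [← initialPart_glue h₁ (s := s) (r₂ := r₂), h, initialPart_glue h₁']
  · rw [← finalPart_glue h₁ (s := s) (r₂ := r₂), h, finalPart_glue h₁']

namespace IsIntervalPosetOn

variable (hr : IsIntervalPosetOn n r) (hk : IsGreatest {j | r 0 j} k)
include hr hk

theorem rel_of_le {i : ℕ} (hi : i ≤ k) : r i k := by
  rcases hi.eq_or_lt with rfl | hik
  · exact hr.refl (hr.lt_and_lt hk.1).2
  rcases i.eq_zero_or_pos with rfl | hi₀
  · exact hk.1
  · exact hr.incr hi₀ hik hk.1

theorem isCut_of_isGreatest : IsCut r k := by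
  intro i j hij hjk
  by_contra! hki
  have hkj : r k j := by
    rcases hki.eq_or_lt with rfl | hki
    · exact hij
    · exact hr.decr hjk hki hij
  exact hjk.ne (hr.antisymm (hr.rel_of_le hk hjk.le) hkj)

theorem le_of_rel_of_le {i j : ℕ} (hij : r i j) (hik : i ≤ k) : j ≤ k := by
  by_contra! hkj
  have hkj' : r k j := by
    rcases hik.eq_or_lt with rfl | hik
    · exact hij
    · exact hr.incr hik hkj hij
  exact hkj.not_ge (hk.2 (hr.trans hk.1 hkj'))

variable (hs : IsGreatest {i | r i k} (k + s))
include hs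

theorem rel_iff_le {i : ℕ} : r i k ↔ i ≤ k + s := by
  refine ⟨fun h => hs.2 h, fun hi => ?_⟩
  rcases le_or_gt i k with hik | hik
  · exact hr.rel_of_le hk hik
  rcases hi.eq_or_lt with rfl | hi
  · exact hs.1
  · exact hr.decr hik hi hs.1

theorem isCut_finalPart : IsCut (finalPart (k + 1) r) s := by
  intro i j hij hjs
  have hjk : r (j + (k + 1)) k := (hr.rel_iff_le hk hs).2 (by omega)
  have := (hr.rel_iff_le hk hs).1 (hr.trans hij hjk)
  omega

theorem glue_initialPart_finalPart :
    glue k s (initialPart k r) (finalPart (k + 1) r) = r := by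
  ext i j
  have hiff : r i k ↔ i ≤ k + s := hr.rel_iff_le hk hs
  have hcut : r i j → j < k → i < k := fun hij hjk => hr.isCut_of_isGreatest hk hij hjk
  have hle : r i j → i ≤ k → j ≤ k := hr.le_of_rel_of_le hk
  grind [glue, initialPart, finalPart]

end IsIntervalPosetOn

theorem IsIntervalPosetOn.exists_glue (hr : IsIntervalPosetOn (n + 1) r) :
    ∃ k m s r₁ r₂, k + m = n ∧ IsIntervalPosetOn k r₁ ∧ IsIntervalPosetOn m r₂ ∧
      s ∈ cuts m r₂ ∧ glue k s r₁ r₂ = r := by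
  have hfinite (P : ℕ → Prop) (hP : ∀ i, P i → i < n + 1) : BddAbove {i | P i} :=
    ⟨n + 1, fun i hi => (hP i hi).le⟩
  obtain ⟨k, hk⟩ := (hfinite (r 0) fun j h => (hr.lt_and_lt h).2).exists_isGreatest_of_nonempty
    ⟨0, hr.refl n.succ_pos⟩
  have hkn := (hr.lt_and_lt hk.1).2
  obtain ⟨t, ht⟩ := (hfinite (r · k) fun i h => (hr.lt_and_lt h).1).exists_isGreatest_of_nonempty
    ⟨k, hr.refl hkn⟩
  obtain ⟨s, rfl⟩ := Nat.exists_eq_add_of_le (ht.2 (hr.refl hkn))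
  have htn := (hr.lt_and_lt ht.1).1
  obtain ⟨m, rfl⟩ := Nat.exists_eq_add_of_le (Nat.lt_succ_iff.1 hkn)
  refine ⟨k, m, s, initialPart k r, finalPart (k + 1) r, rfl,
    isIntervalPosetOn_initialPart hr (by omega), isIntervalPosetOn_finalPart ?_,
    mem_cuts.2 ⟨by omega, hr.isCut_finalPart hk ht⟩, hr.glue_initialPart_finalPart hk ht⟩
  rwa [Nat.add_left_comm, ← Nat.add_assoc]

theorem isCut_glue_of_le {v : ℕ} (hv : v ≤ k) :
    IsCut (glue k s r₁ r₂) v ↔ IsCut r₁ v := by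
  refine ⟨fun h i j hij => h (.inl hij), ?_⟩
  rintro h i j (hij | hij | hij) hj
  · exact h hij hj
  · omega
  · omega

theorem isCut_glue_add (h₁ : IsIntervalPosetOn k r₁) {w : ℕ} :
    IsCut (glue k s r₁ r₂) (w + (k + 1)) ↔ s ≤ w ∧ IsCut r₂ w := by
  constructor
  · intro h
    have hks := h (.inr (.inl ⟨rfl, le_rfl⟩)) (by omega)
    refine ⟨by omega, fun i j hij hj => ?_⟩
    have := @h (i + (k + 1)) (j + (k + 1))
      (.inr (.inr ⟨by omega, by omega, by simpa using hij⟩)) (by omega)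
    omega
  · rintro ⟨hsw, h⟩ i j (hij | hij | ⟨-, hkj, hij⟩) hj
    · have := h₁.lt_and_lt hij
      omega
    · omega
    · have := h hij (by omega)
      omega

theorem cuts_glue (h₁ : IsIntervalPosetOn k r₁) :
    cuts (k + m + 1) (glue k s r₁ r₂) =
      cuts k r₁ ∪ {w ∈ cuts m r₂ | s ≤ w}.map (addRightEmbedding (k + 1)) := by
  ext v
  simp only [mem_union, mem_map, mem_filter, mem_cuts, addRightEmbedding_apply]
  rcases le_or_gt v k with hv | hv
  · rw [isCut_glue_of_le hv]
    grind
  · obtain ⟨w, rfl⟩ := Nat.exists_eq_add_of_le' hv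
    simp only [Nat.succ_eq_add_one, isCut_glue_add h₁, add_left_inj]
    grind

theorem card_cuts_glue (h₁ : IsIntervalPosetOn k r₁) :
    #(cuts (k + m + 1) (glue k s r₁ r₂)) = #(cuts k r₁) + #{w ∈ cuts m r₂ | s ≤ w} := by
  have hdisj : Disjoint (cuts k r₁) ({w ∈ cuts m r₂ | s ≤ w}.map (addRightEmbedding (k + 1))) := by
    simp only [disjoint_left, mem_map, mem_cuts, addRightEmbedding_apply]
    grind
  rw [cuts_glue h₁, card_union_of_disjoint hdisj, card_map]

theorem sum_intervalPosets_succ {M : Type*} [AddCommMonoid M] (f : (ℕ → ℕ → Prop) → M) (n : ℕ) :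
    ∑ r ∈ intervalPosets (n + 1), f r = ∑ p ∈ antidiagonal n, ∑ r₁ ∈ intervalPosets p.1,
      ∑ r₂ ∈ intervalPosets p.2, ∑ s ∈ cuts p.2 r₂, f (glue p.1 s r₁ r₂) := by
  simp_rw [sum_sigma']
  symm
  refine sum_bij (fun q _ => glue q.1.1 q.2.2.2 q.2.1 q.2.2.1) ?_ ?_ ?_ fun _ _ => rfl
  · rintro ⟨⟨k, m⟩, r₁, r₂, s⟩ hq
    simp only [mem_sigma, HasAntidiagonal.mem_antidiagonal, mem_intervalPosets] at hq ⊢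
    obtain ⟨rfl, h₁, h₂, hs⟩ := hq
    exact isIntervalPosetOn_glue h₁ h₂ hs
  · rintro ⟨⟨k, m⟩, r₁, r₂, s⟩ hq ⟨⟨k', m'⟩, r₁', r₂', s'⟩ hq' h
    simp only [mem_sigma, HasAntidiagonal.mem_antidiagonal, mem_intervalPosets] at hq hq' h
    obtain ⟨rfl, rfl, rfl, rfl⟩ := glue_injective hq.2.1 hq'.2.1 h
    obtain rfl : m = m' := by omega
    rfl
  · intro r hr
    obtain ⟨k, m, s, r₁, r₂, hkm, h₁, h₂, hs, rfl⟩ := (mem_intervalPosets.1 hr).exists_glue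
    refine ⟨⟨⟨k, m⟩, r₁, r₂, s⟩, ?_, rfl⟩
    simp only [mem_sigma, HasAntidiagonal.mem_antidiagonal, mem_intervalPosets]
    exact ⟨hkm, h₁, h₂, hs⟩

/-- The polynomial counting the interval-posets of size `n` by their number of cuts. -/
noncomputable def cutPolynomial (n : ℕ) : ℚ[X] :=
  ∑ r ∈ intervalPosets n, Polynomial.X ^ #(cuts n r)

theorem cutPolynomial_zero : cutPolynomial 0 = Polynomial.X := by
  simp [cutPolynomial, intervalPosets_zero, cuts, IsCut]

theorem eval_one_cutPolynomial (n : ℕ) : (cutPolynomial n).eval 1 = #(intervalPosets n) := by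
  simp [cutPolynomial, Polynomial.eval_finsetSum]

theorem cutPolynomial_succ (n : ℕ) :
    cutPolynomial (n + 1) = ∑ p ∈ antidiagonal n, cutPolynomial p.1 *
      ∑ r ∈ intervalPosets p.2, ∑ s ∈ cuts p.2 r, Polynomial.X ^ #{w ∈ cuts p.2 r | s ≤ w} := by
  rw [cutPolynomial, sum_intervalPosets_succ]
  refine sum_congr rfl fun p hp => ?_
  rw [cutPolynomial, sum_mul_sum, ← HasAntidiagonal.mem_antidiagonal.1 hp]
  refine sum_congr rfl fun r₁ h₁ => sum_congr rfl fun r₂ _ => ?_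
  simp only [card_cuts_glue (mem_intervalPosets.1 h₁), pow_add, mul_sum]

theorem X_sub_one_mul_sum_cuts (n : ℕ) (r : ℕ → ℕ → Prop) :
    (Polynomial.X - 1) * ∑ s ∈ cuts n r, (Polynomial.X : ℚ[X]) ^ #{w ∈ cuts n r | s ≤ w} =
      Polynomial.X * (Polynomial.X ^ #(cuts n r) - 1) := by
  rw [sum_card_filter_le (Polynomial.X ^ ·), ← mul_geom_sum, mul_left_comm]
  simp only [pow_succ', mul_sum]

theorem X_sub_one_mul_cutPolynomial_succ (n : ℕ) :
    (Polynomial.X - 1) * cutPolynomial (n + 1) = ∑ p ∈ antidiagonal n,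
      Polynomial.X * cutPolynomial p.1 *
        (cutPolynomial p.2 - Polynomial.C ((cutPolynomial p.2).eval 1)) := by
  rw [cutPolynomial_succ, mul_sum]
  refine sum_congr rfl fun p _ => ?_
  rw [mul_left_comm, mul_sum, sum_congr rfl fun r _ => X_sub_one_mul_sum_cuts p.2 r, ← mul_sum,
    sum_sub_distrib, ← cutPolynomial, mul_left_comm, ← mul_assoc, eval_one_cutPolynomial]
  simp

theorem isTamariCatalytic_mk_cutPolynomial :
    IsTamariCatalytic (PowerSeries.mk cutPolynomial) := by
  rw [isTamariCatalytic_iff]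
  simp only [coeff_mk]
  exact ⟨cutPolynomial_zero, X_sub_one_mul_cutPolynomial_succ⟩

theorem card_intervalPosets_eq_two_mul_raneyNumber_sub (n : ℕ) :
    (#(intervalPosets n) : ℚ) = 2 * raneyNumber 4 2 n - raneyNumber 4 3 n := by
  have hpow (r : ℕ) : coeff n (raneySeries 4 1 ^ (r + 1)) = raneyNumber 4 (r + 1) n := by
    rw [raneySeries_one_pow 3, raneySeries, coeff_mk]
  have h := congrArg (coeff n) (isTamariCatalytic_mk_cutPolynomial.map_eval_one
    (raneySeries_one_eq_one_add 3))
  rw [coeff_map, coeff_mk, Polynomial.coe_evalRingHom, eval_one_cutPolynomial, map_sub,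
    two_mul, map_add, hpow 1, hpow 2, ← two_mul] at h
  exact h

end IntervalPosets

/-- The number `N(n)` of Tamari interval-posets of size `n ≥ 1` satisfies
`(n+1)! · (3n+2)! · N(n) = 2 · (4n+1)!`,
i.e. `N(n) = 2·(4n+1)! / ((n+1)!·(3n+2)!)`. -/
theorem tamari_interval_posets_count (n : ℕ) (hn : 1 ≤ n) :
    Nat.factorial (n + 1) * Nat.factorial (3 * n + 2) *
        Nat.card {r : Fin n → Fin n → Prop // IsTamariIntervalPoset n r} =
      2 * Nat.factorial (4 * n + 1) := by
  have h := card_intervalPosets_eq_two_mul_raneyNumber_sub n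
  rw [card_intervalPosets, two_mul_raneyNumber_sub_raneyNumber, eq_div_iff (by positivity),
    mul_comm] at h
  exact_mod_cast h
end

section
/- Fix integers m ≥ 1 and n ≥ 1, and let N be the number of partial orders ≺ on {1,…,mn} that are Tamari interval-posets and additionally satisfy j+1 ≺ j for every j with 1 ≤ j ≤ mn−1 such that m does not divide j. Then n·(mn+1)·N = (m+1)·binom((m+1)²·n + m, n−1). -/
/-!
Let `k` be the largest label above the minimal label `a` of an interval-poset on `a, …, b - 1`.
Apart from the fact that `k` is above `a, …, e - 1` for some `e`, no relation involves `k` or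
crosses it, so that the interval-poset is determined by its restrictions to the labels before and
after `k` and by `e`; the chain relations amount to `k = a` or `m ∣ k`, to the chain relations of
the two parts, and to a restriction on `e`. Marking the labels that are below no smaller label,
this decomposition becomes the functional equation of Bousquet-Mélou, Fusy and Préville-Ratelle,
`G = (1 + s) + (1 + s) t Δ^m G` with `Δ f = G (f - f(0)) / s`, which has only one solution. That
solution is explicit in terms of the parameters `z` and `u` with `t = z (1 - z) ^ (m (m + 2))` and
`1 + s = (1 + u) / (1 + z u) ^ (m + 1)`; the equation is verified through the symmetry of
`1 / u + 1 + z + z u` under `u ↦ 1 / (z u)`. At `s = 0` the solution is a combination of powers of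
the generalized binomial series `B = 1 + t B ^ (m + 1) ^ 2`, whose coefficients are known.
-/

namespace MTamari

open Finset

section IntervalPosets

/-- `R` is the graph of a Tamari interval-poset on the integers `a, …, b - 1` containing the
`m`-chains; `(i, j) ∈ R` means `i ≺ j`. Labels start at `0`, so that the chain relation
`j + 1 ≺ j` of the paper, `m ∤ j`, relates the labels `j` and `j - 1`. -/
structure IsChainedIntervalPoset (m a b : ℕ) (R : Finset (ℕ × ℕ)) : Prop where
  bounds : ∀ i j, (i, j) ∈ R → (a ≤ i ∧ i < b) ∧ a ≤ j ∧ j < b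
  refl : ∀ i, a ≤ i → i < b → (i, i) ∈ R
  antisymm : ∀ i j, (i, j) ∈ R → (j, i) ∈ R → i = j
  trans : ∀ i j l, (i, j) ∈ R → (j, l) ∈ R → (i, l) ∈ R
  increasing : ∀ i j l, i < j → j < l → (i, l) ∈ R → (j, l) ∈ R
  decreasing : ∀ i j l, i < j → j < l → (l, i) ∈ R → (j, i) ∈ R
  chain : ∀ j, a ≤ j → j + 1 < b → ¬ m ∣ j + 1 → (j + 1, j) ∈ R

variable {m a b i j k l d e : ℕ} {R R₁ R₂ : Finset (ℕ × ℕ)}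

/-- The part of a relation that lives on the integers `a, …, b - 1`. -/
def restrict (a b : ℕ) (R : Finset (ℕ × ℕ)) : Finset (ℕ × ℕ) :=
  R ∩ Ico a b ×ˢ Ico a b

lemma mem_restrict :
    (i, j) ∈ restrict a b R ↔ (i, j) ∈ R ∧ (a ≤ i ∧ i < b) ∧ a ≤ j ∧ j < b := by
  simp [restrict]

/-- The elements of `a, …, b - 1` that are below no smaller integer: the roots of the forest of
decreasing relations. -/
def roots (a b : ℕ) (R : Finset (ℕ × ℕ)) : Finset ℕ :=
  {i ∈ Ico a b | ∀ h < i, (i, h) ∉ R}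

lemma mem_roots : i ∈ roots a b R ↔ (a ≤ i ∧ i < b) ∧ ∀ h < i, (i, h) ∉ R := by
  simp [roots]

/-- The integers `e` for which an interval-poset `R` on `a, …, b - 1` can be preceded by a new
minimal label `a - 1` above exactly `a - 1, …, e - 1`. If `m ∤ a`, the chain relation
`a ≺ a - 1` rules out `e = a`. -/
def cuts (m a b : ℕ) (R : Finset (ℕ × ℕ)) : Finset ℕ :=
  {e ∈ insert b (roots a b R) | m ∣ a ∨ e ≠ a}

lemma mem_cuts : e ∈ cuts m a b R ↔ (e = b ∨ e ∈ roots a b R) ∧ (m ∣ a ∨ e ≠ a) := by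
  simp [cuts]

/-- The union of `R₁` on `a, …, k - 1` and `R₂` on `k + 1, …, b - 1`, with `k` put above
`a, …, e - 1`. -/
def glue (a k e : ℕ) (R₁ R₂ : Finset (ℕ × ℕ)) : Finset (ℕ × ℕ) :=
  R₁ ∪ R₂ ∪ Ico a e ×ˢ {k}

lemma mem_glue :
    (i, j) ∈ glue a k e R₁ R₂ ↔ (i, j) ∈ R₁ ∨ (i, j) ∈ R₂ ∨ (a ≤ i ∧ i < e) ∧ j = k := by
  simp [glue, eq_comm]

/-- The conditions under which `glue a k e R₁ R₂` is a chained interval-poset on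
`a, …, b - 1`. -/
structure IsGluable (m a b k e : ℕ) (R₁ R₂ : Finset (ℕ × ℕ)) : Prop where
  le : a ≤ k
  lt : k < b
  eq_or_dvd : k = a ∨ m ∣ k
  left : IsChainedIntervalPoset m a k R₁
  right : IsChainedIntervalPoset m (k + 1) b R₂
  mem_cuts : e ∈ cuts m (k + 1) b R₂

namespace IsChainedIntervalPoset

lemma increasing_of_le (hR : IsChainedIntervalPoset m a b R) (hij : i ≤ j) (hjl : j ≤ l)
    (h : (i, l) ∈ R) : (j, l) ∈ R := by
  rcases hij.eq_or_lt with rfl | hij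
  · exact h
  rcases hjl.eq_or_lt with rfl | hjl
  · exact hR.refl j (hR.bounds _ _ h).2.1 (hR.bounds _ _ h).2.2
  · exact hR.increasing i j l hij hjl h

lemma decreasing_of_le (hR : IsChainedIntervalPoset m a b R) (hij : i ≤ j) (hjl : j ≤ l)
    (h : (l, i) ∈ R) : (j, i) ∈ R := by
  rcases hjl.eq_or_lt with rfl | hjl
  · exact h
  rcases hij.eq_or_lt with rfl | hij
  · exact hR.refl i (hR.bounds _ _ h).2.1 (hR.bounds _ _ h).2.2
  · exact hR.decreasing i j l hij hjl h

lemma restrict {a' b' : ℕ} (hR : IsChainedIntervalPoset m a b R) (ha : a ≤ a') (hb : b' ≤ b) :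
    IsChainedIntervalPoset m a' b' (restrict a' b' R) := by
  constructor <;> simp only [mem_restrict]
  · exact fun i j h => h.2
  · exact fun i h h' => ⟨hR.refl i (ha.trans h) (h'.trans_le hb), ⟨h, h'⟩, h, h'⟩
  · exact fun i j h h' => hR.antisymm i j h.1 h'.1
  · exact fun i j l h h' => ⟨hR.trans i j l h.1 h'.1, h.2.1, h'.2.2⟩
  · exact fun i j l hij hjl h => ⟨hR.increasing i j l hij hjl h.1, by omega, h.2.2⟩
  · exact fun i j l hij hjl h => ⟨hR.decreasing i j l hij hjl h.1, by omega, h.2.2⟩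
  · exact fun j h h' hm => ⟨hR.chain j (by omega) (by omega) hm, by omega⟩

lemma exists_isGreatest_above (hR : IsChainedIntervalPoset m a b R) (hi : a ≤ i) (hib : i < b) :
    ∃ k, IsGreatest {j | (i, j) ∈ R} k := by
  have hbdd : BddAbove {j | (i, j) ∈ R} := ⟨b, fun j h => (hR.bounds i j h).2.2.le⟩
  exact ⟨_, Nat.sSup_mem ⟨i, hR.refl i hi hib⟩ hbdd, fun _ => le_csSup hbdd⟩

lemma exists_isGreatest_below (hR : IsChainedIntervalPoset m a b R) (hi : a ≤ i) (hib : i < b) :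
    ∃ d, IsGreatest {j | (j, i) ∈ R} d := by
  have hbdd : BddAbove {j | (j, i) ∈ R} := ⟨b, fun j h => (hR.bounds j i h).1.2.le⟩
  exact ⟨_, Nat.sSup_mem ⟨i, hR.refl i hi hib⟩ hbdd, fun _ => le_csSup hbdd⟩

lemma mem_iff_le_of_isGreatest_below (hR : IsChainedIntervalPoset m a b R)
    (hd : IsGreatest {i | (i, k) ∈ R} d) (hi : k ≤ i) : (i, k) ∈ R ↔ i ≤ d :=
  ⟨fun h => hd.2 h, fun h => hR.decreasing_of_le hi h hd.1⟩

section Pivot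

lemma mem_of_le_pivot (hR : IsChainedIntervalPoset m a b R)
    (hk : IsGreatest {j | (a, j) ∈ R} k) (hi : a ≤ i) (hik : i ≤ k) : (i, k) ∈ R :=
  hR.increasing_of_le hi hik hk.1

lemma notMem_of_le_pivot_of_pivot_lt (hR : IsChainedIntervalPoset m a b R)
    (hk : IsGreatest {j | (a, j) ∈ R} k) (hik : i ≤ k) (hkj : k < j) : (i, j) ∉ R := fun h =>
  hkj.not_ge (hk.2 (hR.trans a k j hk.1 (hR.increasing_of_le hik hkj.le h)))

lemma notMem_of_pivot_le_of_lt_pivot (hR : IsChainedIntervalPoset m a b R)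
    (hk : IsGreatest {j | (a, j) ∈ R} k) (hki : k ≤ i) (hjk : j < k) : (i, j) ∉ R := fun h =>
  hjk.ne' (hR.antisymm k j (hR.decreasing_of_le hjk.le hki h)
    (hR.mem_of_le_pivot hk (hR.bounds i j h).2.1 hjk.le))

lemma pivot_eq_or_dvd (hR : IsChainedIntervalPoset m a b R)
    (hk : IsGreatest {j | (a, j) ∈ R} k) : k = a ∨ m ∣ k := by
  have hbounds := hR.bounds a k hk.1
  by_contra! h
  obtain ⟨k, rfl⟩ : ∃ k', k = k' + 1 := Nat.exists_eq_succ_of_ne_zero (by omega)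
  exact hR.notMem_of_pivot_le_of_lt_pivot hk le_rfl k.lt_succ_self
    (hR.chain k (by omega) (by omega) h.2)

lemma glue_restrict (hR : IsChainedIntervalPoset m a b R)
    (hk : IsGreatest {j | (a, j) ∈ R} k) (hd : IsGreatest {i | (i, k) ∈ R} d) :
    glue a k (d + 1) (MTamari.restrict a k R) (MTamari.restrict (k + 1) b R) = R := by
  ext ⟨i, j⟩
  have hbounds := hR.bounds i j
  have hbelow := hR.mem_of_le_pivot (i := i) hk
  have hright := hR.notMem_of_le_pivot_of_pivot_lt (i := i) (j := j) hk
  have hleft := hR.notMem_of_pivot_le_of_lt_pivot (i := i) (j := j) hk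
  have hcut := hR.mem_iff_le_of_isGreatest_below (i := i) hd
  have hkd : k ≤ d := hd.2 (hR.mem_of_le_pivot hk (hR.bounds a k hk.1).2.1 le_rfl)
  simp only [mem_glue, mem_restrict]
  grind

lemma succ_mem_cuts (hR : IsChainedIntervalPoset m a b R) (hmb : m ∣ b)
    (hk : IsGreatest {j | (a, j) ∈ R} k) (hd : IsGreatest {i | (i, k) ∈ R} d) :
    d + 1 ∈ cuts m (k + 1) b (MTamari.restrict (k + 1) b R) := by
  have hkR := hR.bounds a k hk.1
  have hdR := hR.bounds d k hd.1
  have hkd : k ≤ d := hd.2 (hR.mem_of_le_pivot hk hkR.2.1 le_rfl)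
  rw [mem_cuts, mem_roots]
  constructor
  · refine or_iff_not_imp_left.2 fun hdb => ⟨by omega, fun l hl h => ?_⟩
    obtain ⟨h, -, hl'⟩ := mem_restrict.1 h
    have hlk : (l, k) ∈ R := (hR.mem_iff_le_of_isGreatest_below hd (by omega)).2 (by omega)
    exact d.lt_succ_self.not_ge (hd.2 (hR.trans (d + 1) l k h hlk))
  · refine or_iff_not_imp_left.2 fun hmk hdk => ?_
    obtain rfl : d = k := by omega
    have hlt : d + 1 < b := lt_of_le_of_ne (by omega) (by rintro rfl; exact hmk hmb)
    exact d.lt_succ_self.not_ge (hd.2 (hR.chain d hkR.2.1 hlt hmk))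

end Pivot

lemma exists_isGluable (hR : IsChainedIntervalPoset m a b R) (hab : a < b) (hmb : m ∣ b) :
    ∃ k e R₁ R₂, IsGluable m a b k e R₁ R₂ ∧ glue a k e R₁ R₂ = R := by
  obtain ⟨k, hk⟩ := hR.exists_isGreatest_above le_rfl hab
  have hkR := (hR.bounds a k hk.1).2
  obtain ⟨d, hd⟩ := hR.exists_isGreatest_below hkR.1 hkR.2
  exact ⟨k, d + 1, _, _,
    { le := hkR.1
      lt := hkR.2
      eq_or_dvd := hR.pivot_eq_or_dvd hk
      left := hR.restrict le_rfl hkR.2.le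
      right := hR.restrict (hkR.1.trans k.le_succ) le_rfl
      mem_cuts := hR.succ_mem_cuts hmb hk hd }, hR.glue_restrict hk hd⟩

end IsChainedIntervalPoset

namespace IsGluable

lemma bounds (h : IsGluable m a b k e R₁ R₂) : k < e ∧ e ≤ b := by
  have he := h.mem_cuts
  have hkb := h.lt
  rw [MTamari.mem_cuts, mem_roots] at he
  omega

lemma lt_cut_of_mem (h : IsGluable m a b k e R₁ R₂) (hij : (i, j) ∈ R₂) (hj : j < e) :
    i < e := by
  have hi := h.right.bounds i j hij
  by_contra! hei
  rcases (MTamari.mem_cuts.1 h.mem_cuts).1 with rfl | he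
  · exact hei.not_gt hi.1.2
  · exact (mem_roots.1 he).2 j hj (h.right.decreasing_of_le hj.le hei hij)

lemma chain_glue (h : IsGluable m a b k e R₁ R₂) (hj : a ≤ j) (hjb : j + 1 < b)
    (hmj : ¬ m ∣ j + 1) : (j + 1, j) ∈ glue a k e R₁ R₂ := by
  have he := h.bounds
  rw [mem_glue]
  rcases lt_trichotomy j k with hjk | rfl | hkj
  · have hne : j + 1 ≠ k := by
      rintro rfl
      exact h.eq_or_dvd.elim (by omega) hmj
    exact .inl (h.left.chain j hj (by omega) hmj)
  · have hne := (MTamari.mem_cuts.1 h.mem_cuts).2.resolve_left hmj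
    exact .inr (.inr ⟨by omega, rfl⟩)
  · exact .inr (.inl (h.right.chain j hkj hjb hmj))

lemma isChainedIntervalPoset_glue (h : IsGluable m a b k e R₁ R₂) :
    IsChainedIntervalPoset m a b (glue a k e R₁ R₂) := by
  have hak := h.le
  have hkb := h.lt
  have he := h.bounds
  have hcut i j := h.lt_cut_of_mem (i := i) (j := j)
  have b₁ := h.left.bounds
  have b₂ := h.right.bounds
  refine ⟨?_, ?_, ?_, ?_, ?_, ?_, fun j => h.chain_glue⟩ <;> simp only [mem_glue]
  · grind
  · have := h.left.refl
    have := h.right.refl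
    grind
  · have := h.left.antisymm
    have := h.right.antisymm
    grind
  · intro i j l
    have := h.left.trans i j l
    have := h.right.trans i j l
    grind
  · intro i j l
    have := h.left.increasing i j l
    have := h.right.increasing i j l
    grind
  · intro i j l
    have := h.left.decreasing i j l
    have := h.right.decreasing i j l
    grind

lemma restrict_glue_left (h : IsGluable m a b k e R₁ R₂) :
    restrict a k (glue a k e R₁ R₂) = R₁ := by
  ext ⟨i, j⟩
  have b₁ := h.left.bounds i j
  have b₂ := h.right.bounds i j
  simp only [mem_restrict, mem_glue]
  grind

lemma restrict_glue_right (h : IsGluable m a b k e R₁ R₂) :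
    restrict (k + 1) b (glue a k e R₁ R₂) = R₂ := by
  ext ⟨i, j⟩
  have b₁ := h.left.bounds i j
  have b₂ := h.right.bounds i j
  simp only [mem_restrict, mem_glue]
  grind

lemma isGreatest_above_glue (h : IsGluable m a b k e R₁ R₂) :
    IsGreatest {j | (a, j) ∈ glue a k e R₁ R₂} k := by
  have he := h.bounds
  have hk := h.le
  have b₁ := h.left.bounds a
  have b₂ := h.right.bounds a
  simp only [IsGreatest, upperBounds, Set.mem_ofPred_eq, mem_glue]
  grind

lemma isLeast_notMem_glue (h : IsGluable m a b k e R₁ R₂) :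
    IsLeast {i | k ≤ i ∧ (i, k) ∉ glue a k e R₁ R₂} e := by
  have he := h.bounds
  have hk := h.le
  have b₁ i := h.left.bounds i k
  have b₂ i := h.right.bounds i k
  simp only [IsLeast, lowerBounds, Set.mem_ofPred_eq, mem_glue]
  grind

lemma glue_injective {k' e' : ℕ} {R₁' R₂' : Finset (ℕ × ℕ)} (h : IsGluable m a b k e R₁ R₂)
    (h' : IsGluable m a b k' e' R₁' R₂') (heq : glue a k e R₁ R₂ = glue a k' e' R₁' R₂') :
    k = k' ∧ e = e' ∧ R₁ = R₁' ∧ R₂ = R₂' := by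
  obtain rfl : k = k' := h.isGreatest_above_glue.unique (heq ▸ h'.isGreatest_above_glue)
  refine ⟨rfl, h.isLeast_notMem_glue.unique (heq ▸ h'.isLeast_notMem_glue), ?_, ?_⟩
  · rw [← h.restrict_glue_left, heq, h'.restrict_glue_left]
  · rw [← h.restrict_glue_right, heq, h'.restrict_glue_right]

lemma roots_glue (h : IsGluable m a b k e R₁ R₂) :
    roots a b (glue a k e R₁ R₂) =
      roots a k R₁ ∪ insert k {i ∈ roots (k + 1) b R₂ | e ≤ i} := by
  have hk := h.le
  have hkb := h.lt
  have he := h.bounds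
  have b₁ := h.left.bounds
  have b₂ := h.right.bounds
  ext i
  simp only [mem_union, mem_insert, mem_filter, mem_roots, mem_glue]
  rcases lt_trichotomy i k with hik | rfl | hki
  · grind
  · grind
  · constructor
    · rintro ⟨hi, hroot⟩
      have hki' := hroot k hki
      grind
    · grind

lemma card_roots_glue (h : IsGluable m a b k e R₁ R₂) :
    #(roots a b (glue a k e R₁ R₂)) =
      #(roots a k R₁) + (#{i ∈ roots (k + 1) b R₂ | e ≤ i} + 1) := by
  rw [h.roots_glue, card_union_of_disjoint, card_insert_of_notMem]
  · simp [mem_roots]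
  · simp only [disjoint_left, mem_insert, mem_filter, mem_roots]
    grind

end IsGluable

end IntervalPosets

section Weights

open Polynomial

variable {m a b c k : ℕ} {R : Finset (ℕ × ℕ)}

open Classical in
/-- The graphs of the chained interval-posets on `a, …, b - 1`. -/
noncomputable def posets (m a b : ℕ) : Finset (Finset (ℕ × ℕ)) :=
  {R ∈ (Ico a b ×ˢ Ico a b).powerset | IsChainedIntervalPoset m a b R}

lemma mem_posets : R ∈ posets m a b ↔ IsChainedIntervalPoset m a b R := by
  simp only [posets, mem_filter, mem_powerset, and_iff_right_iff_imp]
  rintro hR ⟨i, j⟩ hij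
  simpa using hR.bounds i j hij

lemma posets_self (m a : ℕ) : posets m a a = {∅} := by
  ext R
  rw [mem_posets, mem_singleton]
  constructor
  · refine fun hR => eq_empty_of_forall_notMem fun ⟨i, j⟩ hij => ?_
    have := hR.bounds i j hij
    omega
  · rintro rfl
    constructor <;> grind

/-- The polynomial counting chained interval-posets by their number of roots, written in
`X = x - 1` where `x` marks a root. -/
noncomputable def weight (m a b : ℕ) : ℤ[X] :=
  ∑ R ∈ posets m a b, (1 + X) ^ #(roots a b R)

/-- The analogue of `weight` for pairs of a chained interval-poset and one of its cuts; only the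
roots after the cut are marked. -/
noncomputable def cutWeight (m a b : ℕ) : ℤ[X] :=
  ∑ R ∈ posets m a b, ∑ e ∈ cuts m a b R, (1 + X) ^ #{i ∈ roots a b R | e ≤ i}

lemma weight_self (m a : ℕ) : weight m a a = 1 := by
  simp [weight, posets_self, roots]

lemma coeff_zero_weight (m a b : ℕ) : (weight m a b).coeff 0 = #(posets m a b) := by
  simp [weight, coeff_zero_eq_eval_zero, eval_finsetSum]

lemma weight_eq_sum (hab : a < b) (hmb : m ∣ b) :
    weight m a b = ∑ k ∈ Ico a b with k = a ∨ m ∣ k,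
      weight m a k * ((1 + X) * cutWeight m (k + 1) b) := by
  simp only [weight, cutWeight, mul_sum, sum_mul, ← pow_succ', ← pow_add, sum_sigma']
  have isGluable_iff (k e : ℕ) (R₁ R₂ : Finset (ℕ × ℕ)) : IsGluable m a b k e R₁ R₂ ↔
      (⟨k, ⟨R₂, e⟩, R₁⟩ : Σ _ : ℕ, Σ _ : Σ _ : Finset (ℕ × ℕ), ℕ, Finset (ℕ × ℕ)) ∈
        ({k ∈ Ico a b | k = a ∨ m ∣ k}.sigma fun k =>
          ((posets m (k + 1) b).sigma fun R => cuts m (k + 1) b R).sigma fun _ =>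
            posets m a k) := by
    simp only [mem_sigma, mem_filter, mem_Ico, mem_posets]
    exact ⟨fun h => ⟨⟨⟨h.le, h.lt⟩, h.eq_or_dvd⟩, ⟨h.right, h.mem_cuts⟩, h.left⟩,
      fun ⟨⟨⟨h₁, h₂⟩, h₃⟩, ⟨h₄, h₅⟩, h₆⟩ => ⟨h₁, h₂, h₃, h₆, h₄, h₅⟩⟩
  symm
  refine sum_bij (fun x _ => glue a x.1 x.2.1.2 x.2.2 x.2.1.1) ?_ ?_ ?_ ?_
  · rintro ⟨k, ⟨R₂, e⟩, R₁⟩ h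
    exact mem_posets.2 ((isGluable_iff ..).2 h).isChainedIntervalPoset_glue
  · rintro ⟨k, ⟨R₂, e⟩, R₁⟩ h ⟨k', ⟨R₂', e'⟩, R₁'⟩ h' heq
    obtain ⟨rfl, rfl, rfl, rfl⟩ :=
      ((isGluable_iff ..).2 h).glue_injective ((isGluable_iff ..).2 h') heq
    rfl
  · intro R hR
    obtain ⟨k, e, R₁, R₂, h, rfl⟩ := (mem_posets.1 hR).exists_isGluable hab hmb
    exact ⟨⟨k, ⟨R₂, e⟩, R₁⟩, (isGluable_iff ..).1 h, rfl⟩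
  · rintro ⟨k, ⟨R₂, e⟩, R₁⟩ h
    rw [((isGluable_iff ..).2 h).card_roots_glue]

lemma weight_eq_add_sum (hab : a < b) (hmb : m ∣ b) :
    weight m a b = (1 + X) * cutWeight m (a + 1) b +
      ∑ k ∈ Ioo a b with m ∣ k, weight m a k * ((1 + X) * cutWeight m (k + 1) b) := by
  rw [weight_eq_sum hab hmb, ← Ioo_insert_left hab, filter_insert, if_pos (.inl rfl),
    sum_insert (by simp), weight_self, one_mul]
  congr 2
  exact filter_congr fun k hk => or_iff_right (mem_Ioo.1 hk).1.ne'

lemma mul_sum_pow_card_filter_le {α K : Type*} [LinearOrder α] [CommRing K] (x : K)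
    (T : Finset α) : x * ∑ e ∈ T, (1 + x) ^ #{i ∈ T | e ≤ i} = (1 + x) ^ (#T + 1) - (1 + x) := by
  induction T using Finset.induction_on_min with
  | empty => simp
  | insert i s hi ih =>
    have his : i ∉ s := fun h => (hi i h).false
    have hmin : {j ∈ insert i s | i ≤ j} = insert i s :=
      filter_true_of_mem (by simpa using fun j hj => (hi j hj).le)
    have htail : ∀ e ∈ s, {j ∈ insert i s | e ≤ j} = {j ∈ s | e ≤ j} := fun e he => by
      rw [filter_insert, if_neg (hi e he).not_ge]
    rw [sum_insert his, hmin, sum_congr rfl fun e he => by rw [htail e he], mul_add, ih,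
      card_insert_of_notMem his]
    ring

lemma X_mul_sum_cuts (hR : IsChainedIntervalPoset m a b R) (hab : a ≤ b) (hmb : m ∣ b) :
    X * ∑ e ∈ cuts m a b R, (1 + X : ℤ[X]) ^ #{i ∈ roots a b R | e ≤ i} =
      (if m ∣ a then 1 + X else 1) * (1 + X) ^ #(roots a b R) - 1 := by
  have hb : b ∉ roots a b R := by simp [mem_roots]
  have hb' : {i ∈ roots a b R | b ≤ i} = ∅ := by
    simp only [filter_eq_empty_iff, mem_roots]
    omega
  have hall : X * ∑ e ∈ insert b (roots a b R), (1 + X : ℤ[X]) ^ #{i ∈ roots a b R | e ≤ i} =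
      (1 + X) * (1 + X) ^ #(roots a b R) - 1 := by
    rw [sum_insert hb, mul_add, mul_sum_pow_card_filter_le, hb', card_empty]
    ring
  split_ifs with hma
  · simpa only [cuts, hma, true_or, filter_true] using hall
  · have ha : a ∈ roots a b R := by
      refine mem_roots.2 ⟨⟨le_rfl, lt_of_le_of_ne hab (by rintro rfl; exact hma hmb)⟩, ?_⟩
      exact fun j hj h => hj.not_ge (hR.bounds a j h).2.1
    have ha' : {i ∈ roots a b R | a ≤ i} = roots a b R :=
      filter_true_of_mem fun i hi => (mem_roots.1 hi).1.1
    rw [← add_sum_erase _ _ (mem_insert_of_mem ha), ha'] at hall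
    simp only [cuts, hma, false_or, filter_ne']
    linear_combination hall

lemma X_mul_cutWeight (hab : a ≤ b) (hmb : m ∣ b) :
    X * cutWeight m a b =
      (if m ∣ a then 1 + X else 1) * weight m a b - C ((weight m a b).coeff 0) := by
  rw [cutWeight, mul_sum,
    sum_congr rfl fun R hR => X_mul_sum_cuts (mem_posets.1 hR) hab hmb, coeff_zero_weight,
    sum_sub_distrib, ← mul_sum, weight]
  simp

lemma cutWeight_add_of_weight_add (hc : m ∣ c) (hab : a ≤ b) (hmb : m ∣ b)
    (h : weight m (a + c) (b + c) = weight m a b) :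
    cutWeight m (a + c) (b + c) = cutWeight m a b := by
  apply mul_left_cancel₀ (X_ne_zero (R := ℤ))
  rw [X_mul_cutWeight hab hmb, X_mul_cutWeight (by omega) (dvd_add hmb hc), h,
    if_congr (Nat.dvd_add_left hc) rfl rfl]

lemma weight_add (hc : m ∣ c) (hab : a ≤ b) (hmb : m ∣ b) :
    weight m (a + c) (b + c) = weight m a b := by
  induction hn : b - a using Nat.strong_induction_on generalizing a b with
  | _ n ih =>
  subst hn
  rcases hab.eq_or_lt with rfl | hab
  · simp only [weight_self]
  rw [weight_eq_sum hab hmb, weight_eq_sum (by omega) (dvd_add hmb hc), sum_filter, sum_filter,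
    ← sum_Ico_add']
  refine sum_congr rfl fun k hk => ?_
  obtain ⟨hak, hkb⟩ := mem_Ico.1 hk
  rw [add_right_comm k c 1, if_congr (or_congr (add_left_inj c) (Nat.dvd_add_left hc)) rfl rfl,
    cutWeight_add_of_weight_add hc (by omega) hmb (ih _ (by omega) (by omega) hmb rfl)]
  split_ifs with hk
  · have hleft : weight m (a + c) (k + c) = weight m a k := by
      rcases hk with rfl | hmk
      · simp only [weight_self]
      · exact ih _ (by omega) hak hmk rfl
    rw [hleft]
  · rfl

lemma cutWeight_add (hc : m ∣ c) (hab : a ≤ b) (hmb : m ∣ b) :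
    cutWeight m (a + c) (b + c) = cutWeight m a b :=
  cutWeight_add_of_weight_add hc hab hmb (weight_add hc hab hmb)

end Weights

open PowerSeries

section FixedPoints

variable {R : Type*} [CommRing R]

/-- A map on power series that strictly improves the order of agreement of its arguments, i.e. a
contraction for the `X`-adic metric. -/
def IsContracting (f : R⟦X⟧ → R⟦X⟧) : Prop :=
  ∀ n a b, X ^ n ∣ a - b → X ^ (n + 1) ∣ f a - f b

lemma eq_of_forall_X_pow_dvd_sub {a b : R⟦X⟧} (h : ∀ n, X ^ n ∣ a - b) : a = b := by
  ext n
  have := X_pow_dvd_iff.1 (h (n + 1)) n n.lt_succ_self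
  rwa [map_sub, sub_eq_zero] at this

namespace IsContracting

variable {f : R⟦X⟧ → R⟦X⟧}

lemma eq_of_isFixedPt (hf : IsContracting f) {a b : R⟦X⟧} (ha : f.IsFixedPt a)
    (hb : f.IsFixedPt b) : a = b := by
  refine eq_of_forall_X_pow_dvd_sub fun n => ?_
  induction n with
  | zero => simp
  | succ n ih =>
    rw [← ha.eq, ← hb.eq]
    exact hf n a b ih

lemma X_pow_dvd_iterate_sub_iterate (hf : IsContracting f) (n : ℕ) (a b : R⟦X⟧) :
    X ^ n ∣ f^[n] a - f^[n] b := by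
  induction n with
  | zero => simp
  | succ n ih =>
    rw [Function.iterate_succ_apply', Function.iterate_succ_apply']
    exact hf n _ _ ih

lemma exists_isFixedPt (hf : IsContracting f) : ∃ a, f.IsFixedPt a := by
  let limit : R⟦X⟧ := mk fun i => coeff i (f^[i + 1] 0)
  have happrox (n : ℕ) : X ^ n ∣ limit - f^[n] 0 := by
    rw [X_pow_dvd_iff]
    intro i hi
    have hstable := hf.X_pow_dvd_iterate_sub_iterate (i + 1) 0 (f^[n - (i + 1)] 0)
    rw [← Function.iterate_add_apply, Nat.add_sub_cancel' hi] at hstable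
    simpa only [limit, map_sub, coeff_mk] using X_pow_dvd_iff.1 hstable i i.lt_succ_self
  refine ⟨limit, eq_of_forall_X_pow_dvd_sub fun n => ?_⟩
  have hnext := hf n _ _ (happrox n)
  rw [← Function.iterate_succ_apply' f] at hnext
  have hdiff := dvd_sub hnext (happrox (n + 1))
  rw [sub_sub_sub_cancel_right] at hdiff
  exact (pow_dvd_pow X n.le_succ).trans hdiff

end IsContracting

end FixedPoints

section GeneralizedBinomialSeries

variable {R : Type*} [CommRing R] {B : R⟦X⟧} {p : ℕ}

variable (R p) in
lemma exists_eq_one_add_X_mul_pow :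
    ∃ B : R⟦X⟧, B = 1 + X * B ^ p := by
  have hf : IsContracting fun B : R⟦X⟧ => 1 + X * B ^ p := fun n a b h => by
    rw [add_sub_add_left_eq_sub, ← mul_sub, pow_succ']
    exact mul_dvd_mul_left _ (h.trans (sub_dvd_pow_sub_pow a b p))
  exact hf.exists_isFixedPt.imp fun _ hB => hB.eq.symm

lemma pow_succ_of_eq_one_add_X_mul_pow (hB : B = 1 + X * B ^ p) (r : ℕ) :
    B ^ (r + 1) = B ^ r + X * B ^ (r + p) := by
  calc B ^ (r + 1) = B ^ r * (1 + X * B ^ p) := by rw [← hB, pow_succ]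
    _ = B ^ r + X * B ^ (r + p) := by ring

lemma natCast_choose_succ_mul (M n : ℕ) :
    (M.choose (n + 1) : R) * (n + 1) = M.choose n * (M - n) := by
  rcases le_or_gt n M with h | h
  · have := congrArg (Nat.cast (R := R)) (Nat.choose_succ_right_eq M n)
    push_cast [h] at this
    exact this
  · simp [Nat.choose_eq_zero_of_lt h, Nat.choose_eq_zero_of_lt (h.trans n.lt_succ_self)]

variable [IsDomain R] [CharZero R]

/-- The Rothe–Hagen coefficients; the factor `p * n + r` stands on the left because it vanishes for
`n = r = 0`. -/
lemma mul_coeff_pow_of_eq_one_add_X_mul_pow (hp : p ≠ 0) (hB : B = 1 + X * B ^ p) (n r : ℕ) :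
    (p * n + r : R) * coeff n (B ^ r) = r * (p * n + r).choose n := by
  induction n generalizing r with
  | zero =>
    have hB₀ : constantCoeff B = 1 := by rw [hB]; simp
    simp [hB₀]
  | succ n ihn =>
    induction r with
    | zero => simp [coeff_one]
    | succ r ihr =>
      obtain ⟨M, hM⟩ : ∃ M, M = p * n + p + r := ⟨_, rfl⟩
      have hMR : (M : R) = p * n + p + r := by simp [hM]
      have hM₀ : (M : R) ≠ 0 := Nat.cast_ne_zero.2 (by omega)
      have ihn := ihn (r + p)
      have hchoose := natCast_choose_succ_mul (R := R) M n
      rw [show p * n + (r + p) = M by omega] at ihn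
      rw [show p * (n + 1) + r = M by rw [hM]; ring] at ihr
      rw [show p * (n + 1) + (r + 1) = M + 1 by rw [hM]; ring,
        pow_succ_of_eq_one_add_X_mul_pow hB, map_add, coeff_succ_X_mul, Nat.choose_succ_succ]
      push_cast at ihn ihr ⊢
      apply mul_left_cancel₀ hM₀
      rw [hMR] at hchoose ⊢
      linear_combination (p * n + p + r + 1 : R) * (ihn + ihr) - p * hchoose

lemma succ_mul_coeff_succ_pow_succ (hp : p ≠ 0) (hB : B = 1 + X * B ^ p) (n r : ℕ) :
    (n + 1 : R) * coeff (n + 1) (B ^ (r + 1)) = (r + 1) * (p * (n + 1) + r).choose n := by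
  have hcoeff := mul_coeff_pow_of_eq_one_add_X_mul_pow hp hB (n + 1) (r + 1)
  have hchoose := congrArg (Nat.cast (R := R)) (Nat.add_one_mul_choose_eq (p * (n + 1) + r) n)
  have hne : ((p * (n + 1) + r + 1 : ℕ) : R) ≠ 0 := Nat.cast_ne_zero.2 (by omega)
  apply mul_left_cancel₀ hne
  rw [← add_assoc] at hcoeff
  push_cast at hcoeff hchoose ⊢
  linear_combination (n + 1 : R) * hcoeff - (r + 1 : R) * hchoose

end GeneralizedBinomialSeries

open scoped Polynomial

section DividedDifferences

variable {K : Type*} [CommRing K] {c f g L : K[X]⟦X⟧} {k n : ℕ}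

/-- Evaluation of the polynomial coefficients at `0`. The series independent of the polynomial
variable are those fixed by this map. -/
noncomputable def evalZero : K[X]⟦X⟧ →+* K[X]⟦X⟧ :=
  PowerSeries.map (Polynomial.C.comp Polynomial.constantCoeff)

/-- Coefficientwise `g ↦ (g - g(0)) / X`. -/
noncomputable def divX (f : K[X]⟦X⟧) : K[X]⟦X⟧ :=
  PowerSeries.mk fun n => (coeff n f).divX

/-- The variable of the polynomial coefficients. It stands for `s = x - 1`, where `x` is the
catalytic variable marking roots, so that evaluation at `0` forgets the marking. -/
noncomputable def catVar : K[X]⟦X⟧ := PowerSeries.C Polynomial.X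

@[simp]
lemma evalZero_catVar : evalZero (catVar : K[X]⟦X⟧) = 0 := by
  simp [evalZero, catVar]

@[simp]
lemma evalZero_X : evalZero (X : K[X]⟦X⟧) = X := by
  simp [evalZero]

lemma C_one_add_X : PowerSeries.C (1 + Polynomial.X) = (1 + catVar : K[X]⟦X⟧) := by
  simp [catVar]

lemma catVar_mul_divX (f : K[X]⟦X⟧) : catVar * divX f = f - evalZero f := by
  ext1 n
  rw [catVar, coeff_C_mul, divX, coeff_mk, map_sub, evalZero, coeff_map, eq_sub_iff_add_eq,
    mul_comm]
  exact Polynomial.divX_mul_X_add _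

lemma divX_catVar_mul (f : K[X]⟦X⟧) : divX (catVar * f) = f := by
  ext n i
  simp [divX, catVar, Polynomial.coeff_divX]

lemma catVar_mul_left_injective : Function.Injective fun f : K[X]⟦X⟧ => catVar * f :=
  Function.LeftInverse.injective divX_catVar_mul

lemma divX_mul_of_evalZero_eq (hc : evalZero c = c) (f : K[X]⟦X⟧) :
    divX (c * f) = c * divX f := by
  apply catVar_mul_left_injective
  simp only [mul_left_comm catVar, catVar_mul_divX, map_mul, hc, mul_sub]

lemma X_pow_dvd_divX_sub_divX (h : X ^ n ∣ f - g) : X ^ n ∣ divX f - divX g := by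
  rw [X_pow_dvd_iff] at h ⊢
  intro i hi
  have hcoeff := h i hi
  rw [map_sub, sub_eq_zero] at hcoeff ⊢
  rw [divX, divX, coeff_mk, coeff_mk, hcoeff]

/-- The divided difference operator `f ↦ L · (f - f(0)) / X`. -/
noncomputable def divDiff (L f : K[X]⟦X⟧) : K[X]⟦X⟧ := L * divX f

lemma divDiff_one_add_catVar (L : K[X]⟦X⟧) : divDiff L (1 + catVar) = L := by
  have h : divX (1 + catVar : K[X]⟦X⟧) = 1 := by
    apply catVar_mul_left_injective
    simp [catVar_mul_divX]
  rw [divDiff, h, mul_one]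

lemma divDiff_iterate_mul (hc : evalZero c = c) (L f : K[X]⟦X⟧) (k : ℕ) :
    (divDiff L)^[k] (c * f) = c * (divDiff L)^[k] f := by
  have h : Function.Semiconj (c * ·) (divDiff L) (divDiff L) := fun f => by
    simp only [divDiff, divX_mul_of_evalZero_eq hc, mul_left_comm]
  exact ((h.iterate_right k).eq f).symm

lemma divDiff_mul_iterate (hc : evalZero c = c) (L f : K[X]⟦X⟧) (k : ℕ) :
    (divDiff (c * L))^[k] f = c ^ k * (divDiff L)^[k] f := by
  induction k with
  | zero => simp
  | succ k ih =>
    have hck : evalZero (c ^ k) = c ^ k := by rw [map_pow, hc]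
    rw [Function.iterate_succ_apply', Function.iterate_succ_apply', ih, divDiff, divDiff,
      divX_mul_of_evalZero_eq hck]
    ring

/-- The functional equation of the `m`-Tamari intervals, written for `G = (1 + s) F` where `F` is
their generating function and `s` is the catalytic variable. -/
def IsTamariSolution (m : ℕ) (G : K[X]⟦X⟧) : Prop :=
  G = (1 + catVar) + (1 + catVar) * X * (divDiff G)^[m] G

lemma IsTamariSolution.unique {m : ℕ} {G H : K[X]⟦X⟧} (hG : IsTamariSolution m G)
    (hH : IsTamariSolution m H) : G = H := by
  have hf : IsContracting fun G : K[X]⟦X⟧ =>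
      (1 + catVar) + (1 + catVar) * X * (divDiff G)^[m] G := by
    intro n a b h
    have hiter (k : ℕ) : X ^ n ∣ (divDiff a)^[k] a - (divDiff b)^[k] b := by
      induction k with
      | zero => exact h
      | succ k ih =>
        rw [Function.iterate_succ_apply', Function.iterate_succ_apply']
        exact dvd_mul_sub_mul h (X_pow_dvd_divX_sub_divX ih)
    rw [add_sub_add_left_eq_sub, ← mul_sub, pow_succ', mul_assoc]
    exact (mul_dvd_mul_left _ (hiter m)).mul_left _
  exact hf.eq_of_isFixedPt hG.symm hH.symm

/-- The combinations of `L * s ^ (k - 1), …, L ^ k`, where `s = catVar`, with coefficients that do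
not involve `s`. -/
noncomputable def homogeneousSums (L : K[X]⟦X⟧) :
    ℕ → Submodule (evalZero.eqLocus (RingHom.id K[X]⟦X⟧)) K[X]⟦X⟧
  | 0 => ⊥
  | k + 1 => Submodule.span _ {L ^ (k + 1)} ⊔
      (homogeneousSums L k).map (LinearMap.mulLeft _ catVar)

namespace homogeneousSums

variable {v : K[X]⟦X⟧}

lemma mem_succ : v ∈ homogeneousSums L (k + 1) ↔
    ∃ d, evalZero d = d ∧ ∃ v' ∈ homogeneousSums L k, v = d * L ^ (k + 1) + catVar * v' := by
  simp only [homogeneousSums, Submodule.mem_sup, Submodule.mem_span_singleton, Submodule.mem_map,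
    LinearMap.mulLeft_apply]
  constructor
  · rintro ⟨_, ⟨d, rfl⟩, _, ⟨v', hv', rfl⟩, rfl⟩
    exact ⟨d, d.2, v', hv', rfl⟩
  · rintro ⟨d, hd, v', hv', rfl⟩
    exact ⟨_, ⟨⟨d, hd⟩, rfl⟩, _, ⟨v', hv', rfl⟩, rfl⟩

lemma const_mul_mem (hc : evalZero c = c) (hv : v ∈ homogeneousSums L k) :
    c * v ∈ homogeneousSums L k :=
  (homogeneousSums L k).smul_mem ⟨c, hc⟩ hv

lemma catVar_mul_mem (hv : v ∈ homogeneousSums L k) : catVar * v ∈ homogeneousSums L (k + 1) :=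
  mem_succ.2 ⟨0, map_zero _, v, hv, by ring⟩

lemma mul_mem (hv : v ∈ homogeneousSums L k) : L * v ∈ homogeneousSums L (k + 1) := by
  induction k generalizing v with
  | zero => simp_all [homogeneousSums]
  | succ k ih =>
    obtain ⟨d, hd, v', hv', rfl⟩ := mem_succ.1 hv
    exact mem_succ.2 ⟨d, hd, L * v', ih hv', by ring⟩

lemma mul_catVar_pow_mem (L : K[X]⟦X⟧) (k : ℕ) : L * catVar ^ k ∈ homogeneousSums L (k + 1) := by
  induction k with
  | zero => exact mem_succ.2 ⟨1, map_one _, 0, zero_mem _, by ring⟩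
  | succ k ih =>
    rw [pow_succ', mul_left_comm]
    exact catVar_mul_mem ih

end homogeneousSums

/-- Evaluating `h` at `s = 0` identifies the coefficient of `L ^ k` in `v` as `S(0)`; then
`L ^ k * (S - S(0)) = L ^ (k - 1) * s * Δ S`, and a factor `s` cancels. -/
lemma eq_divDiff_iterate {S T v : K[X]⟦X⟧} (hL : IsLeftRegular (evalZero L))
    (hv : v ∈ homogeneousSums L k) (h : catVar ^ k * T = L ^ k * S - v) :
    T = (divDiff L)^[k] S := by
  induction k generalizing S v with
  | zero => simp_all [homogeneousSums]
  | succ k ih =>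
    obtain ⟨d, hd, v', hv', rfl⟩ := homogeneousSums.mem_succ.1 hv
    have hdS : d = evalZero S := by
      have h₀ := congrArg evalZero h
      simp only [map_mul, map_sub, map_add, map_pow, evalZero_catVar, hd] at h₀
      apply hL.pow (k + 1)
      linear_combination h₀
    rw [Function.iterate_succ_apply]
    refine ih hv' (catVar_mul_left_injective ?_)
    simp only [divDiff]
    linear_combination h - L ^ (k + 1) * catVar_mul_divX S - L ^ (k + 1) * hdS

end DividedDifferences

section GeneratingFunctions

variable {m a : ℕ}

/-- For `a ≤ m`, the generating function of the chained interval-posets on `n + 1` blocks of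
length `m`, the first of which has lost its first `a` elements. -/
noncomputable def blockSeries (m a : ℕ) : ℤ[X]⟦X⟧ :=
  PowerSeries.mk fun n => weight m a (m * (n + 1))

/-- The analogue of `blockSeries` for `cutWeight`. -/
noncomputable def cutSeries (m a : ℕ) : ℤ[X]⟦X⟧ :=
  PowerSeries.mk fun n => cutWeight m a (m * (n + 1))

lemma sum_Ioo_filter_dvd {M : Type*} [AddCommMonoid M] (ha : a < m) (n : ℕ) (f : ℕ → M) :
    ∑ k ∈ Ioo a (m * (n + 1)) with m ∣ k, f k = ∑ p ∈ range n, f (m * (p + 1)) := by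
  have hset : {k ∈ Ioo a (m * (n + 1)) | m ∣ k} = (range n).image fun p => m * (p + 1) := by
    ext k
    simp only [mem_filter, mem_Ioo, mem_image, mem_range]
    constructor
    · rintro ⟨⟨hak, hkn⟩, _ | c, rfl⟩
      · omega
      · exact ⟨c, by simpa using lt_of_mul_lt_mul_left' hkn, rfl⟩
    · rintro ⟨p, hp, rfl⟩
      exact ⟨⟨by nlinarith, by gcongr; omega⟩, dvd_mul_right _ _⟩
  rw [hset, sum_image]
  intro p _ q _ h
  simpa [show m ≠ 0 by omega] using h

lemma blockSeries_eq (ha : a < m) :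
    blockSeries m a = (1 + catVar) * cutSeries m (a + 1) +
      X * (blockSeries m a * ((1 + catVar) * cutSeries m 1)) := by
  ext1 n
  have han : a < m * (n + 1) := ha.trans_le (Nat.le_mul_of_pos_right m n.succ_pos)
  rw [← C_one_add_X, map_add, coeff_C_mul, blockSeries, cutSeries, cutSeries, coeff_mk, coeff_mk,
    weight_eq_add_sum han (dvd_mul_right _ _), sum_Ioo_filter_dvd ha]
  congr 1
  rcases n with _ | n
  · simp
  rw [coeff_succ_X_mul, coeff_mul,
    ← Nat.sum_antidiagonal_eq_sum_range_succ fun p _ =>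
      weight m a (m * (p + 1)) * ((1 + Polynomial.X) * cutWeight m (m * (p + 1) + 1) _)]
  refine sum_congr rfl fun ⟨p, q⟩ hpq => ?_
  obtain rfl : p + q = n := by simpa using hpq
  have htranslate := cutWeight_add (a := 1) (b := m * (q + 1)) (dvd_mul_right m (p + 1))
    (Nat.mul_pos (by omega) q.succ_pos) (dvd_mul_right m (q + 1))
  rw [coeff_C_mul, coeff_mk, coeff_mk, ← htranslate]
  congr 3 <;> ring

lemma blockSeries_self_eq (m : ℕ) : blockSeries m m = 1 + X * blockSeries m 0 := by
  ext1 n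
  rcases n with _ | n
  · simp [blockSeries, weight_self]
  · have htranslate := weight_add (dvd_refl m) (m * (n + 1)).zero_le (dvd_mul_right _ _)
    rw [zero_add, ← mul_add_one] at htranslate
    rw [map_add, coeff_succ_X_mul, coeff_one, if_neg n.succ_ne_zero, zero_add, blockSeries,
      blockSeries, coeff_mk, coeff_mk, htranslate]

lemma catVar_mul_cutSeries (ha : a ≤ m) :
    catVar * cutSeries m a =
      (if m ∣ a then 1 + catVar else 1) * blockSeries m a - evalZero (blockSeries m a) := by
  have hC : (if m ∣ a then 1 + catVar else 1 : ℤ[X]⟦X⟧) =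
      PowerSeries.C (if m ∣ a then 1 + Polynomial.X else 1) := by
    split_ifs <;> simp [C_one_add_X]
  ext1 n
  rw [hC, catVar, map_sub, coeff_C_mul, coeff_C_mul, cutSeries, blockSeries, evalZero, coeff_map,
    coeff_mk, coeff_mk,
    X_mul_cutWeight (ha.trans (Nat.le_mul_of_pos_right m n.succ_pos)) (dvd_mul_right _ _)]
  rfl

/-- Since `blockSeries m m` is the inverse of `1 - X * (1 + s) * cutSeries m 1`, it solves the
linear equation `blockSeries_eq`. -/
lemma blockSeries_eq_mul_cutSeries (ha : a < m) :
    blockSeries m a = (1 + catVar) * blockSeries m m * cutSeries m (a + 1) := by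
  have hinv : blockSeries m m * (1 - X * ((1 + catVar) * cutSeries m 1)) = 1 := by
    linear_combination (1 - X * ((1 + catVar) * cutSeries m 1)) * blockSeries_self_eq m +
      X * blockSeries_eq (a.zero_le.trans_lt ha)
  linear_combination blockSeries m m * blockSeries_eq ha - blockSeries m a * hinv

lemma divX_one_add_catVar_mul_blockSeries_self (m : ℕ) :
    divX ((1 + catVar) * blockSeries m m) = cutSeries m m := by
  apply catVar_mul_left_injective
  simp [catVar_mul_divX, catVar_mul_cutSeries le_rfl]

lemma divX_blockSeries (ha : 0 < a) (ham : a < m) : divX (blockSeries m a) = cutSeries m a := by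
  apply catVar_mul_left_injective
  simp [catVar_mul_divX, catVar_mul_cutSeries ham.le, Nat.not_dvd_of_pos_of_lt ha ham]

lemma divDiff_iterate_blockSeries {j : ℕ} (h : a + j + 1 = m) :
    (divDiff ((1 + catVar) * blockSeries m m))^[j + 1] ((1 + catVar) * blockSeries m m) =
      blockSeries m a := by
  induction j generalizing a with
  | zero =>
    obtain rfl : a + 1 = m := h
    rw [zero_add, Function.iterate_one, divDiff, divX_one_add_catVar_mul_blockSeries_self,
      ← blockSeries_eq_mul_cutSeries a.lt_succ_self]
  | succ j ih =>
    rw [Function.iterate_succ_apply', ih (a := a + 1) (by omega), divDiff,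
      divX_blockSeries a.succ_pos (by omega), ← blockSeries_eq_mul_cutSeries (by omega)]

lemma isTamariSolution_blockSeries (hm : m ≠ 0) :
    IsTamariSolution m ((1 + catVar) * blockSeries m m) := by
  obtain ⟨j, rfl⟩ := Nat.exists_eq_succ_of_ne_zero hm
  rw [IsTamariSolution, divDiff_iterate_blockSeries (zero_add (j + 1))]
  linear_combination (1 + catVar) * blockSeries_self_eq (j + 1)

end GeneratingFunctions

section Parametrization

variable {K : Type*} [CommRing K] {m : ℕ} {z w W B : K[X]⟦X⟧}

/-- The parametrization of Bousquet-Mélou, Fusy and Préville-Ratelle: in terms of `u = s * w`,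
where `s = catVar` and `W = w⁻¹`, the equation for `w` amounts to
`1 + s = (1 + u) / (1 + z * u) ^ (m + 1)`. -/
structure IsParametrization (m : ℕ) (z w W : K[X]⟦X⟧) : Prop where
  evalZero_eq : evalZero z = z
  mul_eq_one : w * W = 1
  eq_one_add :
    w = 1 + (1 + catVar) * z * w * ∑ i ∈ range (m + 1), (1 + z * (catVar * w)) ^ i

/-- The series `L = (1 + u) * (1 + z * u) / w`, with `u = s * w` and `W = w⁻¹`, of which the
solution of the functional equation is a multiple. -/
noncomputable def paramSeries (z w W : K[X]⟦X⟧) : K[X]⟦X⟧ :=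
  (1 + catVar * w) * (1 + z * (catVar * w)) * W

lemma exists_isParametrization (m : ℕ) (hz : evalZero z = z) (hX : X ∣ z) :
    ∃ w W, IsParametrization m z w W := by
  have hf : IsContracting fun w : K[X]⟦X⟧ =>
      1 + (1 + catVar) * z * w * ∑ i ∈ range (m + 1), (1 + z * (catVar * w)) ^ i := by
    intro n a b h
    have hbase : a - b ∣ (1 + z * (catVar * a)) - (1 + z * (catVar * b)) :=
      ⟨z * catVar, by ring⟩
    have hsum : X ^ n ∣ ∑ i ∈ range (m + 1), (1 + z * (catVar * a)) ^ i -
        ∑ i ∈ range (m + 1), (1 + z * (catVar * b)) ^ i := by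
      rw [← sum_sub_distrib]
      exact dvd_sum fun i _ => h.trans (hbase.trans (sub_dvd_pow_sub_pow _ _ i))
    rw [add_sub_add_left_eq_sub, mul_assoc _ a, mul_assoc _ b, ← mul_sub, pow_succ']
    exact mul_dvd_mul (hX.mul_left _) (dvd_mul_sub_mul h hsum)
  obtain ⟨w, hw⟩ := hf.exists_isFixedPt
  have hunit : IsUnit w := by
    rw [isUnit_iff_constantCoeff, ← hw.eq]
    simp [X_dvd_iff.1 hX]
  obtain ⟨W, hW⟩ := hunit.exists_right_inv
  exact ⟨w, W, hz, hW, hw.eq.symm⟩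

/-- In terms of `u = s * w`, the series `L / s = 1 / u + 1 + z + z * u` is invariant under
`u ↦ 1 / (z * u)` and vanishes at `u = -1`. The series below, divided by `s ^ (k + 1)`, has the same
two properties, hence is a polynomial in `L / s` without constant term. -/
lemma symmetric_mem_homogeneousSums (hz : evalZero z = z) (hW : w * W = 1) (k : ℕ) :
    z * (1 + catVar * w) * ((1 + catVar * w) * W) ^ (k + 1) +
        (1 + z * (catVar * w)) ^ (k + 2) * catVar ^ k * W + (1 - z) ^ (k + 2) * catVar ^ (k + 1) ∈
      homogeneousSums (paramSeries z w W) (k + 1) := by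
  obtain ⟨L, hL⟩ : ∃ L, L = paramSeries z w W := ⟨_, rfl⟩
  obtain ⟨u, hu⟩ : ∃ u, u = catVar * w := ⟨_, rfl⟩
  have hs : catVar = u * W := by linear_combination -W * hu - catVar * hW
  rw [paramSeries, ← hu] at hL
  simp only [paramSeries, ← hu, ← hL]
  have hself := homogeneousSums.mul_catVar_pow_mem L
  have hmul {c v : K[X]⟦X⟧} {j : ℕ} (hc : evalZero c = c) (hv : v ∈ homogeneousSums L j) :=
    homogeneousSums.const_mul_mem hc hv
  induction k using Nat.twoStepInduction with
  | zero =>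
    convert hmul (c := 1 + z) (by simp [hz]) (hself 0) using 1
    rw [hL, hs]
    ring
  | one =>
    convert add_mem (hmul hz (homogeneousSums.mul_mem (hself 0)))
      (hmul (c := (1 - z) * (1 + z + z)) (by simp [hz]) (hself 1)) using 1
    rw [hL, hs]
    ring
  | more k ih₁ ih₂ =>
    convert add_mem
      (add_mem (homogeneousSums.mul_mem ih₂)
        (hmul (c := 1 - z) (by simp [hz]) (homogeneousSums.catVar_mul_mem ih₂)))
      (sub_mem (hmul (c := z * (1 - z) ^ (k + 2)) (by simp [hz]) (hself (k + 2)))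
        (homogeneousSums.catVar_mul_mem (homogeneousSums.mul_mem ih₁))) using 1
    rw [hL, hs]
    ring

namespace IsParametrization

lemma one_add_catVar_mul (h : IsParametrization m z w W) :
    1 + catVar * w = (1 + catVar) * (1 + z * (catVar * w)) ^ (m + 1) := by
  have hgeom := mul_geom_sum (1 + z * (catVar * w)) (m + 1)
  linear_combination (1 + catVar) * hgeom + catVar * h.eq_one_add

lemma paramSeries_eq (h : IsParametrization m z w W) :
    paramSeries z w W = (1 + catVar) * (1 + z * (catVar * w)) ^ (m + 2) * W := by
  rw [paramSeries, h.one_add_catVar_mul]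
  ring

lemma isUnit_evalZero_paramSeries (h : IsParametrization m z w W) :
    IsUnit (evalZero (paramSeries z w W)) := by
  have hW : IsUnit W := .of_mul_eq_one_right w h.mul_eq_one
  simpa [paramSeries] using hW.map evalZero

lemma evalZero_paramSeries (h : IsParametrization m z w W) :
    evalZero (paramSeries z w W) = 1 - (m + 1) * z := by
  have hW := congrArg evalZero h.mul_eq_one
  have hw := congrArg evalZero h.eq_one_add
  simp only [map_mul, map_add, map_one, map_pow, map_sum, evalZero_catVar, h.evalZero_eq, zero_mul,
    mul_zero, add_zero, one_mul, one_pow, sum_const, card_range, nsmul_eq_mul, mul_one,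
    Nat.cast_add, Nat.cast_one] at hW hw
  simp only [paramSeries, map_mul, map_add, map_one, evalZero_catVar, zero_mul, mul_zero, add_zero,
    one_mul]
  linear_combination (1 - (m + 1) * z) * hW - evalZero W * hw

lemma mul_divDiff_iterate_paramSeries (h : IsParametrization m z w W) :
    z * (divDiff (paramSeries z w W))^[m] (paramSeries z w W) =
      (1 + z * (catVar * w)) ^ (m + 2) * W - (1 - z) ^ (m + 2) := by
  have hsum := sub_mem (symmetric_mem_homogeneousSums h.evalZero_eq h.mul_eq_one m)
    (homogeneousSums.mul_catVar_pow_mem (paramSeries z w W) m)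
  have hpow : paramSeries z w W ^ (m + 1) * (z * (1 + catVar)) =
      z * (1 + catVar * w) * ((1 + catVar * w) * W) ^ (m + 1) := by
    rw [paramSeries, mul_pow, mul_pow, mul_pow]
    linear_combination -(1 + catVar * w) ^ (m + 1) * z * W ^ (m + 1) * h.one_add_catVar_mul
  have hiter := eq_divDiff_iterate (S := z * (1 + catVar))
    (T := (1 + z * (catVar * w)) ^ (m + 2) * W - (1 - z) ^ (m + 2))
    h.isUnit_evalZero_paramSeries.isRegular.left hsum
    (by linear_combination -hpow - catVar ^ m * h.paramSeries_eq)
  rw [hiter, divDiff_iterate_mul h.evalZero_eq, Function.iterate_succ_apply,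
    divDiff_one_add_catVar]

lemma isTamariSolution (h : IsParametrization m z w W) (hB : evalZero B = B)
    (hzB : z = X * B ^ (m * (m + 2))) (hBz : B = 1 + z * B) :
    IsTamariSolution m (B ^ (m + 2) * paramSeries z w W) := by
  have hB' : evalZero (B ^ (m + 2)) = B ^ (m + 2) := by rw [map_pow, hB]
  have hiter : X * (divDiff (B ^ (m + 2) * paramSeries z w W))^[m]
      (B ^ (m + 2) * paramSeries z w W) =
        B ^ (m + 2) * ((1 + z * (catVar * w)) ^ (m + 2) * W - (1 - z) ^ (m + 2)) := by
    rw [← h.mul_divDiff_iterate_paramSeries, divDiff_mul_iterate hB', divDiff_iterate_mul hB']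
    linear_combination -B ^ (m + 2) *
      (divDiff (paramSeries z w W))^[m] (paramSeries z w W) * hzB
  have hinv : B ^ (m + 2) * (1 - z) ^ (m + 2) = 1 := by
    rw [← mul_pow, show B * (1 - z) = 1 by linear_combination hBz, one_pow]
  rw [IsTamariSolution, mul_assoc, hiter]
  linear_combination B ^ (m + 2) * h.paramSeries_eq + (1 + catVar) * hinv

end IsParametrization

end Parametrization

section Enumeration

variable {m : ℕ}

lemma evalZero_map_C {K : Type*} [CommRing K] (f : K⟦X⟧) :
    evalZero (PowerSeries.map Polynomial.C f) = PowerSeries.map Polynomial.C f := by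
  ext1 n
  simp [evalZero]

lemma evalZero_blockSeries_self (hm : m ≠ 0) {B : ℤ[X]⟦X⟧} (hB₀ : evalZero B = B)
    (hB : B = 1 + X * B ^ (m + 1) ^ 2) :
    evalZero (blockSeries m m) = (m + 1) * B ^ (m + 1) - m * B ^ (m + 2) := by
  obtain ⟨z, hz⟩ : ∃ z, z = X * B ^ (m * (m + 2)) := ⟨_, rfl⟩
  have hz₀ : evalZero z = z := by rw [hz, map_mul, map_pow, hB₀, evalZero_X]
  have hBz : B = 1 + z * B := by
    rw [hz, mul_assoc, ← pow_succ, show m * (m + 2) + 1 = (m + 1) ^ 2 by ring]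
    exact hB
  obtain ⟨w, W, h⟩ := exists_isParametrization m hz₀ (hz ▸ dvd_mul_right _ _)
  have heq := congrArg evalZero
    ((isTamariSolution_blockSeries hm).unique (h.isTamariSolution hB₀ hz hBz))
  simp only [map_mul, map_add, map_one, map_pow, evalZero_catVar, add_zero, one_mul, hB₀,
    h.evalZero_paramSeries] at heq
  rw [heq]
  linear_combination (m + 1) * B ^ (m + 1) * hBz

lemma card_posets_eq_coeff (hm : m ≠ 0) {B : ℤ⟦X⟧} (hB : B = 1 + X * B ^ (m + 1) ^ 2) (n : ℕ) :
    (#(posets m 0 (m * n)) : ℤ) =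
      (m + 1) * coeff n (B ^ (m + 1)) - m * coeff n (B ^ (m + 2)) := by
  have hseries := evalZero_blockSeries_self hm (evalZero_map_C B)
    (by simpa using congrArg (PowerSeries.map Polynomial.C) hB)
  have hmap : ((m + 1) * PowerSeries.map Polynomial.C B ^ (m + 1) -
      m * PowerSeries.map Polynomial.C B ^ (m + 2) : ℤ[X]⟦X⟧) =
        PowerSeries.map Polynomial.C
          (PowerSeries.C (m + 1 : ℤ) * B ^ (m + 1) - PowerSeries.C (m : ℤ) * B ^ (m + 2)) := by
    simp
  have hcoeff := congrArg (coeff n) (hseries.trans hmap)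
  rw [evalZero, coeff_map, coeff_map, blockSeries, coeff_mk, RingHom.comp_apply,
    Polynomial.C_inj, map_sub, coeff_C_mul, coeff_C_mul] at hcoeff
  have htranslate := weight_add (dvd_refl m) (m * n).zero_le (dvd_mul_right m n)
  rw [← coeff_zero_weight, ← htranslate, ← hcoeff, zero_add]
  rfl

lemma card_posets (hm : m ≠ 0) (n : ℕ) :
    (n + 1) * (m * (n + 1) + 1) * #(posets m 0 (m * (n + 1))) =
      (m + 1) * ((m + 1) ^ 2 * (n + 1) + m).choose n := by
  obtain ⟨B, hB⟩ := exists_eq_one_add_X_mul_pow ℤ ((m + 1) ^ 2)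
  have hp : (m + 1) ^ 2 ≠ 0 := by positivity
  have hcoeff₁ := succ_mul_coeff_succ_pow_succ hp hB n m
  have hcoeff₂ := succ_mul_coeff_succ_pow_succ hp hB n (m + 1)
  have hcard := card_posets_eq_coeff hm hB (n + 1)
  rw [← add_assoc] at hcoeff₂
  obtain ⟨M, hM⟩ : ∃ M, M = (m + 1) ^ 2 * (n + 1) + m := ⟨_, rfl⟩
  rw [← hM] at hcoeff₁ hcoeff₂ ⊢
  have hchoose : (m + 2) * (m * (n + 1) + 1) * (M + 1).choose n = (M + 1) * M.choose n := by
    have hsub : M + 1 - n = (m + 2) * (m * (n + 1) + 1) :=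
      Nat.sub_eq_of_eq_add (by rw [hM]; ring)
    rw [← hsub, mul_comm, ← Nat.choose_mul_succ_eq, mul_comm]
  zify at hM hchoose ⊢
  push_cast at hcoeff₁ hcoeff₂
  rw [hcard]
  linear_combination (m + 1) * (m * (n + 1) + 1) * hcoeff₁ - m * (m * (n + 1) + 1) * hcoeff₂ -
    m * hchoose - m * (M.choose n : ℤ) * hM

end Enumeration

section Relations

variable {m N : ℕ} {R : Finset (ℕ × ℕ)}

open Classical in
/-- The graph of a relation on `Fin N`, as a set of pairs of natural numbers. -/
noncomputable def graph (r : Fin N → Fin N → Prop) : Finset (ℕ × ℕ) :=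
  image (Prod.map Fin.val Fin.val) {p : Fin N × Fin N | r p.1 p.2}

lemma mem_graph {r : Fin N → Fin N → Prop} {i j : ℕ} :
    (i, j) ∈ graph r ↔ ∃ (hi : i < N) (hj : j < N), r ⟨i, hi⟩ ⟨j, hj⟩ := by
  simp only [graph, mem_image, mem_filter, mem_univ, true_and, Prod.exists, Prod.map_apply,
    Prod.mk.injEq, Fin.exists_iff]
  exact ⟨fun ⟨_, hi, _, hj, h, hi', hj'⟩ => by subst hi' hj'; exact ⟨hi, hj, h⟩,
    fun ⟨hi, hj, h⟩ => ⟨i, hi, j, hj, h, rfl, rfl⟩⟩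

lemma graph_injective : Function.Injective (graph (N := N)) := fun r r' h => by
  ext i j
  simpa [mem_graph] using Finset.ext_iff.1 h (i, j)

lemma IsChainedIntervalPoset.exists_graph_eq (hR : IsChainedIntervalPoset m 0 N R) :
    ∃ r : Fin N → Fin N → Prop, graph r = R := by
  refine ⟨fun i j => (i.val, j.val) ∈ R, ?_⟩
  ext ⟨i, j⟩
  rw [mem_graph]
  exact ⟨fun ⟨_, _, h⟩ => h, fun h => ⟨(hR.bounds i j h).1.2, (hR.bounds i j h).2.2, h⟩⟩

lemma isChainedIntervalPoset_graph_iff {r : Fin N → Fin N → Prop} :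
    IsChainedIntervalPoset m 0 N (graph r) ↔ IsTamariIntervalPoset N r ∧
      ∀ j : ℕ, 1 ≤ j → j ≤ N - 1 → ¬ m ∣ j →
        ∀ (h1 : j < N) (h2 : j - 1 < N), r ⟨j, h1⟩ ⟨j - 1, h2⟩ := by
  constructor
  · intro h
    have mem {i j : Fin N} : (i.val, j.val) ∈ graph r ↔ r i j := by simp [mem_graph]
    refine ⟨⟨{ refl := fun i => mem.1 (h.refl i i.1.zero_le i.2)
               trans := fun i j l hij hjl => mem.1 (h.trans i j l (mem.2 hij) (mem.2 hjl))
               antisymm := fun i j hij hji =>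
                 Fin.ext (h.antisymm i j (mem.2 hij) (mem.2 hji)) },
      fun i j l hij hjl hil => mem.1 (h.increasing i j l hij hjl (mem.2 hil)),
      fun i j l hij hjl hli => mem.1 (h.decreasing i j l hij hjl (mem.2 hli))⟩, ?_⟩
    rintro (_ | j) hj - hmj h₁ h₂
    · simp at hj
    · exact mem.1 (h.chain j j.zero_le h₁ hmj)
  · rintro ⟨⟨hr, hinc, hdec⟩, hchain⟩
    constructor <;> simp only [mem_graph]
    · exact fun i j ⟨hi, hj, _⟩ => ⟨⟨i.zero_le, hi⟩, j.zero_le, hj⟩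
    · exact fun i _ hi => ⟨hi, hi, hr.refl _⟩
    · exact fun i j ⟨_, _, h⟩ ⟨_, _, h'⟩ => Fin.mk.inj_iff.1 (hr.antisymm _ _ h h')
    · exact fun i j l ⟨hi, _, h⟩ ⟨_, hl, h'⟩ => ⟨hi, hl, hr.trans _ _ _ h h'⟩
    · exact fun i j l hij hjl ⟨_, hl, h⟩ => ⟨hjl.trans hl, hl, hinc _ ⟨j, _⟩ _ hij hjl h⟩
    · exact fun i j l hij hjl ⟨hl, hi, h⟩ => ⟨hjl.trans hl, hi, hdec _ ⟨j, _⟩ _ hij hjl h⟩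
    · exact fun j _ hj hmj => ⟨hj, by omega, hchain (j + 1) (by omega) (by omega) hmj hj (by omega)⟩

lemma card_relations_eq_card_posets (m N : ℕ) :
    Nat.card {r : Fin N → Fin N → Prop // IsTamariIntervalPoset N r ∧
      ∀ j : ℕ, 1 ≤ j → j ≤ N - 1 → ¬ m ∣ j →
        ∀ (h1 : j < N) (h2 : j - 1 < N), r ⟨j, h1⟩ ⟨j - 1, h2⟩} = #(posets m 0 N) := by
  rw [← Nat.card_eq_finsetCard]
  refine Nat.card_eq_of_bijective
    (fun r => ⟨graph r.1, mem_posets.2 (isChainedIntervalPoset_graph_iff.2 r.2)⟩) ⟨?_, ?_⟩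
  · exact fun r r' h => Subtype.ext (graph_injective (congrArg Subtype.val h))
  · rintro ⟨R, hR⟩
    obtain ⟨r, rfl⟩ := (mem_posets.1 hR).exists_graph_eq
    exact ⟨⟨r, isChainedIntervalPoset_graph_iff.1 (mem_posets.1 hR)⟩, rfl⟩

end Relations

end MTamari

/-- Enumeration of `m`-Tamari intervals: the number `N` of Tamari interval-posets
`≺` on `{1,…,mn}` satisfying moreover `j+1 ≺ j` for every `1 ≤ j ≤ mn−1` with
`m ∤ j` (element `j` of `{1,…,mn}` is modeled by the index `j-1` in `Fin (m*n)`)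
satisfies `n·(mn+1)·N = (m+1)·C((m+1)²·n + m, n−1)`. -/
theorem m_tamari_intervals_count (m n : ℕ) (hm : 1 ≤ m) (hn : 1 ≤ n) :
    n * (m * n + 1) *
        Nat.card {r : Fin (m * n) → Fin (m * n) → Prop //
          IsTamariIntervalPoset (m * n) r ∧
            ∀ j : ℕ, 1 ≤ j → j ≤ m * n - 1 → ¬ m ∣ j →
              ∀ (h1 : j < m * n) (h2 : j - 1 < m * n), r ⟨j, h1⟩ ⟨j - 1, h2⟩} =
      (m + 1) * Nat.choose ((m + 1) ^ 2 * n + m) (n - 1) := by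
  obtain ⟨n, rfl⟩ := Nat.exists_eq_succ_of_ne_zero (Nat.ne_zero_of_lt hn)
  rw [MTamari.card_relations_eq_card_posets]
  exact MTamari.card_posets (Nat.ne_zero_of_lt hm) n
end

section
/- For every n ≥ 1 there exists a bijection φ from the set of area sequences of length n to itself such that for every area sequence a, dinv(φ(a)) = area(a). In particular, the statistics area and dinv are equidistributed on area sequences of length n: for every k, the number of area sequences of length n with area equal to k equals the number of area sequences of length n with dinv equal to k. -/
/-- An area sequence of length `n`: a sequence `a_1, …, a_n` of natural
numbers (indexed here by `Fin n`, index `i` standing for `a_{i+1}`) with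
`a_1 = 0` and `a_{i+1} ≤ a_i + 1`. -/
def IsAreaSeq (n : ℕ) (a : Fin n → ℕ) : Prop :=
  (∀ h : 0 < n, a ⟨0, h⟩ = 0) ∧
    ∀ (i : ℕ) (h : i + 1 < n), a ⟨i + 1, h⟩ ≤ a ⟨i, by omega⟩ + 1

/-- The area of a sequence: `a_1 + a_2 + ⋯ + a_n`. -/
def areaStat (n : ℕ) (a : Fin n → ℕ) : ℕ := ∑ i, a i

/-- The dinv of a sequence: the number of pairs `(i,j)` with `i < j` and
either `a_j = a_i` or `a_j = a_i − 1`. -/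
def dinvStat (n : ℕ) (a : Fin n → ℕ) : ℕ :=
  (Finset.univ.filter fun p : Fin n × Fin n =>
    p.1 < p.2 ∧ (a p.2 = a p.1 ∨ a p.2 + 1 = a p.1)).card

/-!
The bijection is the inverse of a map `zeta` carrying `dinv` to `area`. Remove from an area
sequence the last occurrence of its maximum `m`; what remains is again an area sequence, and `dinv`
drops by the *label* of that entry: the number of `m`s before it plus the number of `m - 1`s after
it. Iterating down to the empty sequence, the labels in reverse order of removal form `zeta`, and
their sum is `dinv`. A label exceeds the next one to be removed by at most one, so `zeta` is an area
sequence. The removed entry can be put back once its label is known, so `zeta` is injective, hence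
bijective on the finite set of area sequences of length `n`.
-/

namespace ZetaMap

section LastMax

variable {α : Type*} {u v l : List α} {m x : α}

section Preorder

variable [Preorder α]

/-- The entry `m` is the last occurrence of the maximum of the list `u ++ m :: v`. -/
structure IsLastMax (u : List α) (m : α) (v : List α) : Prop where
  le_of_mem_left : ∀ x ∈ u, x ≤ m
  lt_of_mem_right : ∀ x ∈ v, x < m

theorem IsLastMax.le_of_mem_append (h : IsLastMax u m v) (hx : x ∈ u ++ v) : x ≤ m :=
  (List.mem_append.1 hx).elim (h.le_of_mem_left x) fun hx => (h.lt_of_mem_right x hx).le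

theorem IsLastMax.le_of_mem (h : IsLastMax u m v) (hx : x ∈ u ++ m :: v) : x ≤ m := by
  rcases List.mem_cons.1 (List.perm_middle.mem_iff.1 hx) with rfl | hx
  · exact le_rfl
  · exact h.le_of_mem_append hx

theorem IsLastMax.notMem_right (h : IsLastMax u m v) : m ∉ v :=
  fun hm => (h.lt_of_mem_right m hm).false

theorem isLastMax_nil_left : IsLastMax [] m v ↔ ∀ x ∈ v, x < m :=
  ⟨fun h => h.lt_of_mem_right, fun h => ⟨by simp, h⟩⟩

theorem isLastMax_cons_left : IsLastMax (x :: u) m v ↔ x ≤ m ∧ IsLastMax u m v :=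
  ⟨fun h => ⟨h.1 x (by simp), fun y hy => h.1 y (by simp [hy]), h.2⟩,
    fun ⟨hx, h⟩ => ⟨by simpa [hx] using h.1, h.2⟩⟩

end Preorder

variable [LinearOrder α]

theorem exists_isLastMax (hl : l ≠ []) : ∃ u m v, l = u ++ m :: v ∧ IsLastMax u m v := by
  induction l with
  | nil => exact absurd rfl hl
  | cons x l ih =>
    by_cases hx : ∀ y ∈ l, y < x
    · exact ⟨[], x, l, rfl, isLastMax_nil_left.2 hx⟩
    · push Not at hx
      obtain ⟨y, hy, hxy⟩ := hx
      obtain ⟨u, m, v, rfl, h⟩ := ih (List.ne_nil_of_mem hy)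
      exact ⟨x :: u, m, v, rfl, isLastMax_cons_left.2 ⟨hxy.trans (h.le_of_mem hy), h⟩⟩

@[elab_as_elim]
theorem lastMax_induction {P : List α → Prop} (nil : P [])
    (insert : ∀ u m v, IsLastMax u m v → P (u ++ v) → P (u ++ m :: v)) (l : List α) : P l := by
  induction hn : l.length generalizing l with
  | zero => rwa [List.length_eq_zero_iff.1 hn]
  | succ n ih =>
    obtain ⟨u, m, v, rfl, h⟩ := exists_isLastMax (List.ne_nil_of_length_eq_add_one hn)
    exact insert u m v h (ih _ (by simpa [← add_assoc] using hn))

/-- Splits a nonempty list as `u ++ m :: v` at the last occurrence `m` of its maximum. -/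
def lastMaxSplit : List α → Option (List α × α × List α)
  | [] => none
  | x :: l =>
    if ∀ y ∈ l, y < x then some ([], x, l)
    else (lastMaxSplit l).map fun (u, m, v) => (x :: u, m, v)

theorem lastMaxSplit_append_cons (h : IsLastMax u m v) :
    lastMaxSplit (u ++ m :: v) = some (u, m, v) := by
  induction u with
  | nil => exact if_pos h.lt_of_mem_right
  | cons x u ih =>
    obtain ⟨hxm, h⟩ := isLastMax_cons_left.1 h
    have hx : ¬ ∀ y ∈ u ++ m :: v, y < x := fun hx => (hx m (by simp)).not_ge hxm
    rw [List.cons_append, lastMaxSplit, if_neg hx, ih h, Option.map_some]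

theorem eq_append_of_lastMaxSplit_eq_some (h : lastMaxSplit l = some (u, m, v)) :
    l = u ++ m :: v := by
  have hl : l ≠ [] := by
    rintro rfl
    simp [lastMaxSplit] at h
  obtain ⟨u', m', v', rfl, h'⟩ := exists_isLastMax hl
  rw [lastMaxSplit_append_cons h'] at h
  cases h
  rfl

end LastMax

/-- The number of pairs of positions `i < j` of a list with `l_j = l_i` or `l_j = l_i - 1`. -/
def dinv : List ℕ → ℕ
  | [] => 0
  | x :: l => l.countP (fun y => y = x ∨ y + 1 = x) + dinv l

/-- The label of the entry `m` of `u ++ m :: v`: the number of `m`s in `u` plus the number of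
`m - 1`s in `v` (none if `m = 0`). It is the contribution of `m` to `dinv` when `m` is the last
maximum. -/
def label (u : List ℕ) (m : ℕ) (v : List ℕ) : ℕ :=
  u.count m + v.countP (· + 1 = m)

/-- The labels met when the last maximum is removed repeatedly, in reverse order of removal. On
area sequences this is Haglund's zeta map. -/
def zeta (l : List ℕ) : List ℕ :=
  match h : lastMaxSplit l with
  | none => []
  | some (u, m, v) =>
    have : u.length + v.length < l.length := by
      simp [eq_append_of_lastMaxSplit_eq_some h]
    zeta (u ++ v) ++ [label u m v]
termination_by l.length

/-- Area sequences as lists; the empty list is one. -/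
def IsAreaList (l : List ℕ) : Prop :=
  (∀ x ∈ l.head?, x = 0) ∧ l.IsChain fun x y => y ≤ x + 1

variable {l l' u v w u' v' : List ℕ} {m m' k : ℕ}

theorem label_eq_of_notMem (hv : m ∉ v) :
    label u m v = (u ++ v).count m + v.countP (· + 1 = m) := by
  rw [label, List.count_append, List.count_eq_zero_of_not_mem hv, add_zero]

theorem label_add_one_eq_count (hu : ∀ x ∈ u, x ≤ m) : label u (m + 1) v = v.count m := by
  have hmu : m + 1 ∉ u := fun hm => (hu _ hm).not_gt m.lt_succ_self
  rw [label, List.count_eq_zero_of_not_mem hmu, zero_add]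
  exact List.countP_congr fun x _ => by simp

theorem dinv_append_cons (h : IsLastMax u m v) :
    dinv (u ++ m :: v) = dinv (u ++ v) + label u m v := by
  induction u with
  | nil =>
    have hv : v.countP (fun y => y = m ∨ y + 1 = m) = v.countP (· + 1 = m) :=
      List.countP_congr fun y hy => by simp [(h.lt_of_mem_right y hy).ne]
    simp only [List.nil_append, dinv, label, hv, List.count_nil]
    omega
  | cons x u ih =>
    obtain ⟨hx, h⟩ := isLastMax_cons_left.1 h
    have hmx : m + 1 ≠ x := by omega
    simp only [List.cons_append, dinv, ih h, label, List.countP_append, List.countP_cons,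
      List.count_cons, decide_eq_true_eq, beq_iff_eq, hmx, or_false, eq_comm (a := m)]
    omega

theorem zeta_nil : zeta [] = [] := by
  rw [zeta]
  rfl

theorem zeta_append_cons (h : IsLastMax u m v) :
    zeta (u ++ m :: v) = zeta (u ++ v) ++ [label u m v] := by
  have hs := lastMaxSplit_append_cons h
  rw [zeta]
  split <;> simp_all

theorem length_zeta (l : List ℕ) : (zeta l).length = l.length := by
  induction l using lastMax_induction with
  | nil => rw [zeta_nil]
  | insert u m v h ih =>
    rw [zeta_append_cons h, List.length_append, ih, List.perm_middle.length_eq]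
    simp

theorem sum_zeta (l : List ℕ) : (zeta l).sum = dinv l := by
  induction l using lastMax_induction with
  | nil => simp [zeta_nil, dinv]
  | insert u m v h ih => rw [zeta_append_cons h, List.sum_append, ih, dinv_append_cons h]; simp

namespace IsAreaList

theorem le_getLast_add_one (hl : IsAreaList (u ++ m :: v)) (hu : u ≠ []) :
    m ≤ u.getLast hu + 1 :=
  (List.isChain_append.1 hl.2).2.2 _ (List.getLast?_eq_some_getLast hu) m (by simp)

theorem eq_add_one_of_lt (hl : IsAreaList (u ++ m :: v)) (hu : ∀ x ∈ u, x ≤ k) (hkm : k < m) :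
    m = k + 1 ∧ k ∈ u := by
  have hne : u ≠ [] := by
    rintro rfl
    have hm : m = 0 := hl.1 m (by simp)
    omega
  have hmem := List.getLast_mem hne
  have hle := hl.le_getLast_add_one hne
  have hk : u.getLast hne = k := by have := hu _ hmem; omega
  exact ⟨by omega, hk ▸ hmem⟩

theorem remove_lastMax (hl : IsAreaList (u ++ m :: v)) (h : IsLastMax u m v) :
    IsAreaList (u ++ v) := by
  rcases eq_or_ne u [] with rfl | hu
  · obtain rfl : m = 0 := hl.1 m (by simp)
    obtain rfl : v = [] := List.eq_nil_iff_forall_not_mem.2 fun x hx =>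
      absurd (h.lt_of_mem_right x hx) x.not_lt_zero
    simp [IsAreaList]
  · obtain ⟨hcu, hcv, -⟩ := List.isChain_append.1 hl.2
    refine ⟨by simpa [List.head?_append_of_ne_nil _ hu] using hl.1,
      List.isChain_append.2 ⟨hcu, hcv.tail, fun y hy z hz => ?_⟩⟩
    obtain rfl : u.getLast hu = y := by simpa [List.getLast?_eq_some_getLast hu] using hy
    exact (h.lt_of_mem_right z (List.mem_of_mem_head? hz)).le.trans (hl.le_getLast_add_one hu)

end IsAreaList

theorem label_le_label_add_one_of_notMem (hv : m ∉ v) (hv' : m ∉ v')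
    (e : u ++ v = u' ++ m :: v') : label u m v ≤ label u' m v' + 1 := by
  have hsuffix : v <:+ v' := by
    have hsuffix_append : v <:+ u' ++ m :: v' := ⟨u, e⟩
    rcases List.suffix_or_suffix_of_suffix hsuffix_append (List.suffix_append u' (m :: v'))
      with hvm | hmv
    · refine (List.suffix_cons_iff.1 hvm).resolve_left ?_
      rintro rfl
      exact hv List.mem_cons_self
    · exact absurd (hmv.mem List.mem_cons_self) hv
  calc label u m v = (u' ++ m :: v').count m + v.countP (· + 1 = m) := by
        rw [label_eq_of_notMem hv, e]
    _ ≤ (u' ++ m :: v').count m + v'.countP (· + 1 = m) := by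
        gcongr
        exact hsuffix.sublist.countP_le
    _ = label u' m v' + 1 := by
        rw [label_eq_of_notMem hv', List.perm_middle.count_eq, List.count_cons_self]
        ring

theorem label_succ_le_label_add_one (h' : IsLastMax u' k v') (e : u ++ v = u' ++ k :: v') :
    label u (k + 1) v ≤ label u' k v' + 1 := by
  have hu : ∀ x ∈ u, x ≤ k := fun x hx => h'.le_of_mem (e ▸ List.mem_append_left v hx)
  calc label u (k + 1) v = v.count k := label_add_one_eq_count hu
    _ ≤ (u ++ v).count k := (List.sublist_append_right u v).count_le k
    _ = (u' ++ v').count k + 1 := by rw [e, List.perm_middle.count_eq, List.count_cons_self]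
    _ ≤ label u' k v' + 1 := by
        rw [label_eq_of_notMem h'.notMem_right]
        omega

theorem label_le_label_add_one (hl : IsAreaList (u ++ m :: v)) (h : IsLastMax u m v)
    (h' : IsLastMax u' m' v') (e : u ++ v = u' ++ m' :: v') :
    label u m v ≤ label u' m' v' + 1 := by
  have hle : m' ≤ m := h.le_of_mem_append (e ▸ by simp)
  rcases hle.eq_or_lt with rfl | hlt
  · exact label_le_label_add_one_of_notMem h.notMem_right h'.notMem_right e
  · have hu : ∀ x ∈ u, x ≤ m' := fun x hx => h'.le_of_mem (e ▸ List.mem_append_left v hx)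
    obtain ⟨rfl, -⟩ := hl.eq_add_one_of_lt hu hlt
    exact label_succ_le_label_add_one h' e

theorem IsAreaList.zeta (hl : IsAreaList l) : IsAreaList (zeta l) := by
  induction l using lastMax_induction with
  | nil => simpa [zeta_nil] using hl
  | insert u m v h ih =>
    have hrec := ih (hl.remove_lastMax h)
    rw [zeta_append_cons h]
    rcases eq_or_ne (u ++ v) [] with huv | huv
    · obtain ⟨rfl, rfl⟩ := List.append_eq_nil_iff.1 huv
      simp [zeta_nil, IsAreaList, label]
    · obtain ⟨u', m', v', e, h'⟩ := exists_isLastMax huv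
      have hlabel := label_le_label_add_one hl h h' e
      rw [e, zeta_append_cons h'] at hrec ⊢
      exact ⟨fun x hx => hrec.1 x (by simpa using hx),
        List.isChain_append.2 ⟨hrec.2, by simp, by simpa using hlabel⟩⟩

theorem label_lt_label_of_lt (hl' : IsAreaList (u' ++ m' :: v')) (h : IsLastMax u m v)
    (e : u ++ v = u' ++ v') (hm : m < m') : label u' m' v' < label u m v := by
  have hu' : ∀ x ∈ u', x ≤ m := fun x hx => h.le_of_mem_append (e ▸ List.mem_append_left v' hx)
  obtain ⟨rfl, hmem⟩ := hl'.eq_add_one_of_lt hu' hm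
  calc label u' (m + 1) v' = v'.count m := label_add_one_eq_count hu'
    _ < u'.count m + v'.count m := Nat.lt_add_of_pos_left (List.count_pos_iff.2 hmem)
    _ = (u ++ v).count m := by rw [e, List.count_append]
    _ ≤ label u m v := by
        rw [label_eq_of_notMem h.notMem_right]
        omega

theorem label_append_left_lt (hl : IsAreaList (u ++ w ++ m :: v)) (h : IsLastMax u m (w ++ v))
    (hw : w ≠ []) : label (u ++ w) m v < label u m (w ++ v) := by
  have hv : m ∉ v := fun hm => h.notMem_right (List.mem_append_right w hm)
  have hmem := List.getLast_mem hw
  have hlast : w.getLast hw + 1 = m := by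
    have hlt := h.lt_of_mem_right _ (List.mem_append_left v hmem)
    have hle := hl.le_getLast_add_one (List.append_ne_nil_of_right_ne_nil u hw)
    rw [List.getLast_append_of_ne_nil _ hw] at hle
    omega
  have hpos : 0 < w.countP (· + 1 = m) := List.countP_pos_iff.2 ⟨_, hmem, by simpa⟩
  rw [label_eq_of_notMem h.notMem_right, label_eq_of_notMem hv, List.append_assoc,
    List.countP_append]
  omega

theorem append_cons_eq_of_label_eq (hl : IsAreaList (u ++ m :: v))
    (hl' : IsAreaList (u' ++ m' :: v')) (h : IsLastMax u m v) (h' : IsLastMax u' m' v')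
    (e : u ++ v = u' ++ v') (hlabel : label u m v = label u' m' v') :
    u ++ m :: v = u' ++ m' :: v' := by
  rcases lt_trichotomy m m' with hm | rfl | hm
  · exact absurd hlabel (label_lt_label_of_lt hl' h e hm).ne'
  · rcases List.append_eq_append_iff.1 e with ⟨w, rfl, rfl⟩ | ⟨w, rfl, rfl⟩
    · obtain rfl : w = [] := by_contra fun hw => (label_append_left_lt hl' h hw).ne' hlabel
      simp
    · obtain rfl : w = [] := by_contra fun hw => (label_append_left_lt hl h' hw).ne hlabel
      simp
  · exact absurd hlabel (label_lt_label_of_lt hl h' e.symm hm).ne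

theorem zeta_injOn : Set.InjOn zeta {l | IsAreaList l} := by
  intro l hl l' hl' e
  induction l using lastMax_induction generalizing l' with
  | nil =>
    refine (List.length_eq_zero_iff.1 ?_).symm
    rw [← length_zeta, ← e, zeta_nil, List.length_nil]
  | insert u m v h ih =>
    have hne : l' ≠ [] := by
      rintro rfl
      simp [zeta_append_cons h, zeta_nil] at e
    obtain ⟨u', m', v', rfl, h'⟩ := exists_isLastMax hne
    rw [zeta_append_cons h, zeta_append_cons h'] at e
    obtain ⟨erest, elabel⟩ := List.append_inj' e rfl
    exact append_cons_eq_of_label_eq hl hl' h h'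
      (ih (hl.remove_lastMax h) (hl'.remove_lastMax h') erest) (List.singleton_inj.1 elabel)

variable {n : ℕ}

theorem isAreaList_ofFn {a : Fin n → ℕ} : IsAreaList (List.ofFn a) ↔ IsAreaSeq n a := by
  rw [IsAreaList, IsAreaSeq, List.isChain_iff_getElem]
  exact and_congr (by cases n <;> simp) (by simp)

theorem countP_ofFn {α : Type*} (a : Fin n → α) (p : α → Prop) [DecidablePred p] :
    (List.ofFn a).countP p = ∑ i, if p (a i) then 1 else 0 := by
  induction n with
  | zero => simp
  | succ n ih =>
    simp only [List.ofFn_succ, List.countP_cons, ih, Fin.sum_univ_succ, decide_eq_true_eq, add_comm]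

theorem dinv_ofFn (a : Fin n → ℕ) : dinv (List.ofFn a) = dinvStat n a := by
  induction n with
  | zero => simp [dinv, dinvStat]
  | succ n ih =>
    rw [List.ofFn_succ, dinv, ih, countP_ofFn, dinvStat, dinvStat, Finset.card_filter,
      Finset.card_filter, Fintype.sum_prod_type, Fintype.sum_prod_type]
    simp [Fin.sum_univ_succ, -Finset.sum_boole]

theorem apply_le_of_isAreaSeq {a : Fin n → ℕ} (h : IsAreaSeq n a) (i : Fin n) : a i ≤ i := by
  obtain ⟨i, hi⟩ := i
  induction i with
  | zero => exact (h.1 hi).le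
  | succ i ih => exact (h.2 i hi).trans (Nat.succ_le_succ (ih _))

instance finite_isAreaSeq (n : ℕ) : Finite {a : Fin n → ℕ // IsAreaSeq n a} :=
  Set.Finite.subset (Set.finite_Iic fun i : Fin n => (i : ℕ)) fun _ h => apply_le_of_isAreaSeq h

/-- The map `zeta` on sequences indexed by `Fin n`. -/
def zetaFin (a : Fin n → ℕ) : Fin n → ℕ :=
  fun i => (zeta (List.ofFn a)).get (i.cast (by simp [length_zeta]))

theorem ofFn_zetaFin (a : Fin n → ℕ) : List.ofFn (zetaFin a) = zeta (List.ofFn a) :=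
  List.ext_getElem (by simp [length_zeta]) (by simp [zetaFin])

theorem isAreaSeq_zetaFin {a : Fin n → ℕ} (h : IsAreaSeq n a) : IsAreaSeq n (zetaFin a) := by
  rw [← isAreaList_ofFn] at h ⊢
  rw [ofFn_zetaFin]
  exact h.zeta

theorem areaStat_zetaFin (a : Fin n → ℕ) : areaStat n (zetaFin a) = dinvStat n a := by
  rw [areaStat, ← List.sum_ofFn, ofFn_zetaFin, sum_zeta, dinv_ofFn]

theorem zetaFin_injOn : Set.InjOn zetaFin {a | IsAreaSeq n a} := fun a ha b hb e =>
  List.ofFn_injective <| zeta_injOn (isAreaList_ofFn.2 ha) (isAreaList_ofFn.2 hb) <| by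
    rw [← ofFn_zetaFin, ← ofFn_zetaFin, e]

/-- Haglund's zeta map as a permutation of the area sequences of length `n`. -/
noncomputable def zetaEquiv (n : ℕ) :
    {a : Fin n → ℕ // IsAreaSeq n a} ≃ {a : Fin n → ℕ // IsAreaSeq n a} :=
  Equiv.ofBijective (Subtype.map zetaFin fun _ => isAreaSeq_zetaFin) <|
    Finite.injective_iff_bijective.1 fun a b e =>
      Subtype.ext <| zetaFin_injOn a.2 b.2 <| congrArg Subtype.val e

theorem areaStat_zetaEquiv (a : {a : Fin n → ℕ // IsAreaSeq n a}) :
    areaStat n (zetaEquiv n a).val = dinvStat n a.val :=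
  areaStat_zetaFin a.val

theorem natCard_fiber_congr {α β γ : Type*} {p : α → Prop} {q : β → Prop} {f : α → γ} {g : β → γ}
    (φ : Subtype p ≃ Subtype q) (hφ : ∀ a, g (φ a) = f a) (k : γ) :
    Nat.card {a // p a ∧ f a = k} = Nat.card {b // q b ∧ g b = k} :=
  Nat.card_congr <| (Equiv.subtypeSubtypeEquivSubtypeInter _ _).symm.trans <|
    (φ.subtypeEquiv fun a => by rw [hφ]).trans (Equiv.subtypeSubtypeEquivSubtypeInter _ _)

end ZetaMap

open ZetaMap in
/-- For every `n ≥ 1` there is a bijection `φ` from area sequences of length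
`n` to themselves with `dinv (φ a) = area a`; in particular, `area` and `dinv`
are equidistributed on area sequences of length `n`. -/
theorem zeta_map_area_dinv (n : ℕ) (hn : 1 ≤ n) :
    (∃ φ : {a : Fin n → ℕ // IsAreaSeq n a} ≃ {a : Fin n → ℕ // IsAreaSeq n a},
      ∀ a : {a : Fin n → ℕ // IsAreaSeq n a},
        dinvStat n (φ a).val = areaStat n a.val) ∧
    ∀ k : ℕ,
      Nat.card {a : Fin n → ℕ // IsAreaSeq n a ∧ areaStat n a = k} =
        Nat.card {a : Fin n → ℕ // IsAreaSeq n a ∧ dinvStat n a = k} := by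
  have dinvStat_symm (a : {a : Fin n → ℕ // IsAreaSeq n a}) :
      dinvStat n ((zetaEquiv n).symm a).val = areaStat n a.val := by
    rw [← areaStat_zetaEquiv, Equiv.apply_symm_apply]
  exact ⟨⟨(zetaEquiv n).symm, dinvStat_symm⟩, natCard_fiber_congr (zetaEquiv n).symm dinvStat_symm⟩
end
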